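/- arXiv:1011.4884 — 2 statements merged into one kernel-verified Lean document; each statement's English description precedes it below -/
import Mathlib

section
/- Fix n ≥ 1, m ≥ 1 and pairwise distinct pairs (ν₁,μ₁),…,(ν_m,μ_m) ∈ ℕⁿ × ℕⁿ. For c ∈ ℂᵐ let f_c(z) := Σ_{j=1}^m c_j z^{ν_j} z̄^{μ_j}, and let Γ ⊂ ℝⁿ be the union of the faces not containing 0 of the convex hull of {0} ∪ {ν_j + μ_j : j = 1,…,m}. Then the set U_Γ := {c ∈ ℂᵐ | Γ⁺(f_c) = Γ (as subsets of ℝⁿ) and f_c is Newton non-degenerate} is open in ℂᵐ and dense in ℂᵐ. -/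
open Complex Filter Finset

noncomputable section

abbrev MixedCoeff (n : ℕ) := ((Fin n → ℕ) × (Fin n → ℕ)) →₀ ℂ

namespace Mixed

variable {n : ℕ}

/-- Evaluation of a mixed polynomial given by its coefficient function `c`:
`f(z) = Σ c(ν,μ) zᵛ z̄ᵘ`. -/
def eval (c : MixedCoeff n) (z : Fin n → ℂ) : ℂ :=
  c.sum fun p a => a * (∏ i, z i ^ p.1 i) * ∏ i, (starRingEnd ℂ) (z i) ^ p.2 i

/-- `∂f/∂z_i` evaluated at `(z, z̄)`. -/
def dz (c : MixedCoeff n) (i : Fin n) (z : Fin n → ℂ) : ℂ :=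
  c.sum fun p a => a * (p.1 i) * (∏ j, z j ^ (p.1 j - if j = i then 1 else 0)) *
    ∏ j, (starRingEnd ℂ) (z j) ^ p.2 j

/-- `∂f/∂z̄_i` evaluated at `(z, z̄)`. -/
def dzbar (c : MixedCoeff n) (i : Fin n) (z : Fin n → ℂ) : ℂ :=
  c.sum fun p a => a * (p.2 i) * (∏ j, z j ^ p.1 j) *
    ∏ j, (starRingEnd ℂ) (z j) ^ (p.2 j - if j = i then 1 else 0)

/-- The singular locus of `f` as a real map `ℝ²ⁿ → ℝ²`. -/
def Sing (c : MixedCoeff n) : Set (Fin n → ℂ) :=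
  {z | ¬ Function.Surjective ⇑(fderiv ℝ (eval c) z)}

/-- The Milnor set `M(f)`. -/
def Milnor (c : MixedCoeff n) : Set (Fin n → ℂ) :=
  {z | ∃ (l : ℝ) (m : ℂ), m ≠ 0 ∧
    ∀ i, (l : ℂ) * z i = m * (starRingEnd ℂ) (dz c i z) + (starRingEnd ℂ) m * dzbar c i z}

/-- The set `S(f)` of asymptotic ρ-nonregular values. -/
def Sset (c : MixedCoeff n) : Set ℂ :=
  {v | ∃ zk : ℕ → (Fin n → ℂ), (∀ k, zk k ∈ Milnor c) ∧
    Tendsto (fun k => ‖zk k‖) atTop atTop ∧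
    Tendsto (fun k => eval c (zk k)) atTop (nhds v)}

/-- The point of `ℝⁿ` attached to the exponent pair `(ν,μ)`, namely `ν+μ`. -/
def suppPt (p : (Fin n → ℕ) × (Fin n → ℕ)) : Fin n → ℝ := fun i => ((p.1 i + p.2 i : ℕ) : ℝ)

/-- The support of `f`, as a subset of `ℝⁿ`. -/
def suppPts (c : MixedCoeff n) : Set (Fin n → ℝ) := suppPt '' (c.support : Set _)

/-- The Newton polyhedron `Γ₀(f)`: convex hull of `{0} ∪ supp(f)`. -/
def Gamma0 (c : MixedCoeff n) : Set (Fin n → ℝ) := convexHull ℝ (insert 0 (suppPts c))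

/-- `supp(f)‾`: the convex hull of `supp(f) \ {0}`. -/
def suppBar (c : MixedCoeff n) : Set (Fin n → ℝ) := convexHull ℝ (suppPts c \ {0})

/-- `F` is a face of the (compact convex) set `C`: either `C` itself or the set of
minimizers on `C` of a linear functional, and nonempty. -/
def IsFaceOf (C F : Set (Fin n → ℝ)) : Prop :=
  F.Nonempty ∧ (F = C ∨ ∃ a : Fin n → ℝ,
    F = {x ∈ C | ∀ y ∈ C, ∑ i, a i * x i ≤ ∑ i, a i * y i})

/-- `Δ` is a face of the Newton boundary at infinity `Γ⁺(f)`: a face of `Γ₀(f)` not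
containing the origin. -/
def IsGammaPlusFace (c : MixedCoeff n) (Δ : Set (Fin n → ℝ)) : Prop :=
  IsFaceOf (Gamma0 c) Δ ∧ (0 : Fin n → ℝ) ∉ Δ

/-- `Γ⁺(f)` as a subset of `ℝⁿ`: the union of the faces of `Γ₀(f)` not containing `0`. -/
def GammaPlusSet (c : MixedCoeff n) : Set (Fin n → ℝ) :=
  {x | ∃ Δ, IsGammaPlusFace c Δ ∧ x ∈ Δ}

/-- The truncation `f_Δ` of `f` to a subset `Δ ⊆ ℝⁿ`. -/
def trunc (c : MixedCoeff n) (Δ : Set (Fin n → ℝ)) : MixedCoeff n :=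
  @Finsupp.filter _ _ _ (fun p => suppPt p ∈ Δ) (Classical.decPred _) c

/-- Newton non-degeneracy: for every face `Δ` of `Γ⁺(f)`,
`Sing f_Δ ∩ f_Δ⁻¹(0) ∩ (ℂ*)ⁿ = ∅`. -/
def NewtonNonDeg (c : MixedCoeff n) : Prop :=
  ∀ Δ, IsGammaPlusFace c Δ → ∀ z : Fin n → ℂ, (∀ i, z i ≠ 0) →
    eval (trunc c Δ) z = 0 → z ∉ Sing (trunc c Δ)

/-- Newton strong non-degeneracy: for every face `Δ` of `Γ⁺(f)`,
`Sing f_Δ ∩ (ℂ*)ⁿ = ∅`. -/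
def NewtonStronglyNonDeg (c : MixedCoeff n) : Prop :=
  ∀ Δ, IsGammaPlusFace c Δ → ∀ z : Fin n → ℂ, (∀ i, z i ≠ 0) →
    z ∉ Sing (trunc c Δ)

/-- `Δ` is a bad face of `supp(f)‾`. -/
def IsBadFace (c : MixedCoeff n) (Δ : Set (Fin n → ℝ)) : Prop :=
  IsFaceOf (suppBar c) Δ ∧ (0 : Fin n → ℝ) ∈ affineSpan ℝ Δ ∧
    ∃ a : Fin n → ℝ, (∃ i, a i < 0) ∧ (∃ j, 0 < a j) ∧
      {x ∈ suppBar c | ∑ i, a i * x i = 0} = Δ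

/-- `f` depends effectively on all its variables. -/
def EffectiveAll (c : MixedCoeff n) : Prop :=
  ∀ i, ∃ p ∈ c.support, 0 < p.1 i + p.2 i

/-- The Euclidean norm on `ℂⁿ`. -/
def norm2 (v : Fin n → ℂ) : ℝ := Real.sqrt (∑ i, Complex.normSq (v i))

end Mixed

/-!
Multiply the coefficients supported on an outer face by `exp (x (ν j + μ j))`, for linear forms `x`
running off to infinity: after a common rescaling, the products which do not tend to `0` are
supported on a smaller outer face. Since the arguments of the variables range over a compact torus,
the coefficients for which some face carries a singular zero in `(ℂ*)ⁿ` thus form a closed set.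

In logarithmic coordinates, rescalings of the variables and of the polynomial act on the
coefficients through a real subspace `R`, and coefficients admit a singular zero in `(ℂ*)ⁿ` exactly
when, up to such a rescaling, they lie in the orthogonal complement `W` of `R` for a real bilinear
form. The degenerate coefficients of a face are therefore covered by `exp (-R) * W`. Positive real
dilations of the coefficients of the face preserve `W` and come from a line in `R`; this loses one
dimension, so that the degenerate coefficients have dimension less than `dim R + dim W = 2m`, and
their complement is dense.
-/

section OuterFace

open scoped Topology

variable {ι V : Type*} [AddCommGroup V] [Module ℝ V] {p : ι → V} {S S' : Set ι}

/-- The index set of a face, missing the origin, of the polytope `conv ({0} ∪ p(ι))`. Such a face is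
cut out by a linear functional, which is normalised here to take the value `1` on it. -/
def IsOuterFace (p : ι → V) (S : Set ι) : Prop :=
  S.Nonempty ∧ ∃ a : Module.Dual ℝ V, (∀ j ∈ S, a (p j) = 1) ∧ ∀ j ∉ S, a (p j) < 1

lemma IsOuterFace.of_subface [Finite ι] (hS : IsOuterFace p S) (hS' : S' ⊆ S) (hne : S'.Nonempty)
    {b : Module.Dual ℝ V} (hb : ∀ j ∈ S', b (p j) = 0) (hb_neg : ∀ j ∈ S \ S', b (p j) < 0) :
    IsOuterFace p S' := by
  obtain ⟨-, a, ha, ha_lt⟩ := hS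
  have hsmall : ∀ᶠ ε in 𝓝[>] (0 : ℝ), ∀ j ∉ S, (a + ε • b) (p j) < 1 := by
    refine Eventually.filter_mono nhdsWithin_le_nhds ?_
    simp only [eventually_all, LinearMap.add_apply, LinearMap.smul_apply, smul_eq_mul]
    intro j hj
    have hcont : ContinuousAt (fun ε : ℝ => a (p j) + ε * b (p j)) 0 := by fun_prop
    exact hcont.eventually (gt_mem_nhds (by simpa using ha_lt j hj))
  obtain ⟨ε, hε, hpos⟩ := (hsmall.and self_mem_nhdsWithin).exists
  refine ⟨hne, a + ε • b, fun j hj => by simp [ha j (hS' hj), hb j hj], fun j hj => ?_⟩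
  by_cases hjS : j ∈ S
  · simpa [ha j hjS] using mul_neg_of_pos_of_neg hpos (hb_neg j ⟨hjS, hj⟩)
  · exact hε j hjS

lemma exists_tendsto_nhds_or_tendsto_atBot {X : Type*} (u : Ultrafilter X) {f : X → ℝ} {M : ℝ}
    (hf : ∀ᶠ k in u, f k ≤ M) : (∃ y, Tendsto f u (𝓝 y)) ∨ Tendsto f u atBot := by
  have hlim : Tendsto (fun k => (f k : EReal)) u (𝓝 (u.map fun k => (f k : EReal)).lim) :=
    (u.map fun k => (f k : EReal)).le_nhds_lim
  have hle : (u.map fun k => (f k : EReal)).lim ≤ M :=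
    le_of_tendsto hlim (hf.mono fun k hk => EReal.coe_le_coe_iff.2 hk)
  induction h : (u.map fun k => (f k : EReal)).lim with
  | bot => exact Or.inr (EReal.tendsto_coe_nhds_bot_iff.1 (h ▸ hlim))
  | coe y => exact Or.inl ⟨y, EReal.tendsto_coe.1 (h ▸ hlim)⟩
  | top => simp [h] at hle

lemma exists_eventually_forall_le {X : Type*} (u : Ultrafilter X) (hS : S.Finite) (hne : S.Nonempty)
    (f : X → ι → ℝ) : ∃ i ∈ S, ∀ᶠ k in u, ∀ j ∈ S, f k j ≤ f k i :=
  (u.eventually_exists_mem_iff hS).1 <|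
    Eventually.of_forall fun k => Set.exists_max_image S (f k) hS hne

lemma exists_pseudoInverse {K E F : Type*} [Field K] [AddCommGroup E] [Module K E] [AddCommGroup F]
    [Module K F] (T : E →ₗ[K] F) : ∃ R : F →ₗ[K] E, ∀ x, T (R (T x)) = T x := by
  obtain ⟨R₀, hR₀⟩ := T.rangeRestrict.exists_rightInverse_of_surjective T.range_rangeRestrict
  obtain ⟨R, rfl⟩ := LinearMap.exists_extend R₀
  exact ⟨R, fun x => congrArg Subtype.val (LinearMap.congr_fun hR₀ (T.rangeRestrict x))⟩

lemma IsOuterFace.exists_subface_of_normalized [Finite ι] (hS : IsOuterFace p S) {X : Type*}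
    (u : Ultrafilter X) (x : X → Module.Dual ℝ V) {i : ι} (hi : i ∈ S)
    (hxi : ∀ k, x k (p i) = 0) (hx : ∀ᶠ k in u, ∀ j ∈ S, x k (p j) ≤ 0) :
    ∃ S' ⊆ S, IsOuterFace p S' ∧ ∃ y : Module.Dual ℝ V,
      (∀ j ∈ S', Tendsto (fun k => x k (p j)) u (𝓝 (y (p j)))) ∧
      ∀ j ∈ S \ S', Tendsto (fun k => x k (p j)) u atBot := by
  set S' : Set ι := {j ∈ S | ∃ τ, Tendsto (fun k => x k (p j)) u (𝓝 τ)}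
  have hatBot : ∀ j ∈ S \ S', Tendsto (fun k => x k (p j)) u atBot := fun j hj =>
    (exists_tendsto_nhds_or_tendsto_atBot u (hx.mono fun k hk => hk j hj.1)).resolve_left
      fun hτ => hj.2 ⟨hj.1, hτ⟩
  choose τ hτ using fun j : S' => j.2.2
  -- `R (T (x k))` converges and agrees with `x k` on `S'`, so that eventually `x k - R (T (x k))`
  -- is a functional which cuts out `S'` in `S`.
  let T : Module.Dual ℝ V →ₗ[ℝ] S' → ℝ := LinearMap.pi fun j => LinearMap.applyₗ (p j)
  obtain ⟨R, hR⟩ := exists_pseudoInverse T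
  have hRT : ∀ j, Tendsto (fun k => R (T (x k)) (p j)) u (𝓝 (R τ (p j))) := fun j =>
    ((LinearMap.applyₗ (p j) ∘ₗ R).continuous_of_finiteDimensional.tendsto τ).comp
      (tendsto_pi_nhds.2 hτ)
  have hRT_eq : ∀ k, ∀ j ∈ S', R (T (x k)) (p j) = x k (p j) := fun k j hj =>
    congrFun (hR (x k)) ⟨j, hj⟩
  refine ⟨S', fun j hj => hj.1, ?_, R τ, fun j hj => ?_, hatBot⟩
  · have hdiff : ∀ᶠ k in u, ∀ j ∈ S \ S', (x k - R (T (x k))) (p j) < 0 := by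
      refine eventually_all.2 fun j => ?_
      by_cases hj : j ∈ S \ S'
      · have := (hatBot j hj).atBot_add (hRT j).neg
        filter_upwards [this.eventually_lt_atBot 0] with k hk _ using by simpa using hk
      · exact Eventually.of_forall fun k h => absurd h hj
    obtain ⟨k, hk⟩ := hdiff.exists
    exact hS.of_subface (fun j hj => hj.1)
      ⟨i, hi, 0, by simp [hxi]⟩ (fun j hj => by simp [hRT_eq k j hj]) hk
  · exact (hRT j).congr fun k => hRT_eq k j hj

lemma IsOuterFace.exists_tendsto_exp [Finite ι] (hS : IsOuterFace p S) {X : Type*}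
    (u : Ultrafilter X) (x : X → Module.Dual ℝ V) :
    ∃ S' ⊆ S, IsOuterFace p S' ∧ ∃ (y : Module.Dual ℝ V) (t : X → ℝ), ∀ j ∈ S,
      Tendsto (fun k => Real.exp (x k (p j) - t k)) u
        (𝓝 (S'.indicator (fun j => Real.exp (y (p j))) j)) := by
  obtain ⟨i, hi, hmax⟩ := exists_eventually_forall_le u S.toFinite hS.1 fun k j => x k (p j)
  obtain ⟨a, ha, -⟩ := hS.2
  have hshift : ∀ k, ∀ j ∈ S, (x k - x k (p i) • a) (p j) = x k (p j) - x k (p i) :=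
    fun k j hj => by simp [ha j hj]
  obtain ⟨S', hS'S, hS', y, hlim, hbot⟩ := hS.exists_subface_of_normalized u
    (fun k => x k - x k (p i) • a) hi (fun k => by simp [ha i hi])
    (hmax.mono fun k hk j hj => by rw [hshift k j hj]; exact sub_nonpos.2 (hk j hj))
  refine ⟨S', hS'S, hS', y, fun k => x k (p i), fun j hj => ?_⟩
  simp only [← fun k => hshift k j hj]
  by_cases hj' : j ∈ S'
  · simpa only [Set.indicator_of_mem hj'] using (hlim j hj').rexp
  · rw [Set.indicator_of_notMem hj']
    exact Real.tendsto_exp_atBot.comp (hbot j ⟨hj, hj'⟩)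

theorem isClosed_setOf_exists_isOuterFace_exp_smul_mem [Finite ι] {F : Type*} [AddCommGroup F]
    [Module ℝ F] [TopologicalSpace F] [ContinuousSMul ℝ F] (p : ι → V)
    {W : Submodule ℝ (ι → F)} (hW : IsClosed (W : Set (ι → F))) :
    IsClosed {b : ι → F | ∃ S, IsOuterFace p S ∧ ∃ x : Module.Dual ℝ V,
      S.indicator (fun j => Real.exp (x (p j)) • b j) ∈ W} := by
  refine isClosed_iff_ultrafilter.2 fun b u hub hu => ?_
  obtain ⟨S, hu⟩ := u.eventually_exists_iff.1 hu
  obtain ⟨-, hS, -⟩ := hu.exists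
  obtain ⟨x, hx⟩ := (hu.mono fun _ h => h.2).choice
  obtain ⟨S', hS'S, hS', y, t, ht⟩ := hS.exists_tendsto_exp u x
  refine ⟨S', hS', y, ?_⟩
  have hlim : Tendsto (fun b' : ι → F => Real.exp (-t b') •
      S.indicator (fun j => Real.exp (x b' (p j)) • b' j)) u
      (𝓝 (S'.indicator fun j => Real.exp (y (p j)) • b j)) := by
    refine tendsto_pi_nhds.2 fun j => ?_
    by_cases hj : j ∈ S
    · have hbj : Tendsto (fun b' : ι → F => b' j) u (𝓝 (b j)) := tendsto_pi_nhds.1 hub j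
      rw [Set.indicator_smul_left]
      refine ((ht j hj).smul hbj).congr fun b' => ?_
      simp [hj, smul_smul, ← Real.exp_add, sub_eq_neg_add]
    · simp [hj, Set.notMem_subset hS'S hj, tendsto_const_nhds]
  exact hW.mem_of_tendsto hlim (hx.mono fun b' hb' => W.smul_mem _ hb')

end OuterFace

section ExposedFace

variable {ι V : Type*} [AddCommGroup V] [Module ℝ V] [TopologicalSpace V] {p : ι → V}

lemma IsOuterFace.exists_isExposed [IsTopologicalAddGroup V] [ContinuousSMul ℝ V] [T2Space V]
    [FiniteDimensional ℝ V] {S : Set ι} (hS : IsOuterFace p S) :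
    ∃ Δ, Δ.Nonempty ∧ IsExposed ℝ (convexHull ℝ (insert 0 (Set.range p))) Δ ∧ 0 ∉ Δ ∧
      p ⁻¹' Δ = S := by
  obtain ⟨⟨i, hi⟩, a, ha, ha_lt⟩ := hS
  have ha_le : ∀ j, a (p j) ≤ 1 := fun j => by
    by_cases hj : j ∈ S
    exacts [(ha j hj).le, (ha_lt j hj).le]
  have hull_le : convexHull ℝ (insert 0 (Set.range p)) ⊆ {x | a x ≤ 1} := by
    refine convexHull_min ?_ (convex_halfSpace_le a.isLinear 1)
    simp [Set.insert_subset_iff, Set.range_subset_iff, ha_le]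
  have hmem : ∀ j, p j ∈ convexHull ℝ (insert 0 (Set.range p)) := fun j =>
    subset_convexHull ℝ _ (by simp)
  refine ⟨a.toContinuousLinearMap.toExposed (convexHull ℝ (insert 0 (Set.range p))),
    ⟨p i, hmem i, fun y hy => (hull_le hy).trans (ha i hi).ge⟩,
    ContinuousLinearMap.toExposed.isExposed, fun h => ?_,
    Set.ext fun j => ⟨fun h => ?_, fun hj => ?_⟩⟩
  · exact (h.2 (p i) (hmem i)).not_gt (by simp [ha i hi])
  · by_contra hj
    exact (ha_lt j hj).not_ge ((ha i hi).ge.trans (h.2 (p i) (hmem i)))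
  · exact ⟨hmem j, fun y hy => (hull_le hy).trans (ha j hj).ge⟩

lemma isOuterFace_preimage_of_isExposed {Δ : Set V} (hne : Δ.Nonempty)
    (hΔ : IsExposed ℝ (convexHull ℝ (insert 0 (Set.range p))) Δ) (h0 : 0 ∉ Δ) :
    IsOuterFace p (p ⁻¹' Δ) := by
  obtain ⟨l, hl⟩ := hΔ hne
  obtain ⟨x, hx⟩ := hne
  have hmem_iff : ∀ y ∈ insert 0 (Set.range p), y ∈ Δ ↔ l y = l x := fun y hy => by
    have hy' := subset_convexHull ℝ _ hy
    rw [hl] at hx ⊢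
    exact ⟨fun h => (hx.2 y hy').antisymm (h.2 x hx.1), fun h => ⟨hy', h ▸ hx.2⟩⟩
  have hlt : ∀ y ∈ insert 0 (Set.range p), y ∉ Δ → l y < l x := fun y hy hyΔ =>
    ((hl ▸ hx).2 y (subset_convexHull ℝ _ hy)).lt_of_ne fun h => hyΔ ((hmem_iff y hy).2 h)
  have hpos : 0 < l x := by simpa using hlt 0 (by simp) h0
  refine ⟨?_, (l x)⁻¹ • l.toLinearMap, fun j hj => ?_, fun j hj => ?_⟩
  · by_contra hempty
    have hsub : convexHull ℝ (insert 0 (Set.range p)) ⊆ {y | l y < l x} := by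
      refine convexHull_min (fun y hy => hlt y hy ?_) (convex_halfSpace_lt l.isLinear _)
      obtain rfl | ⟨j, rfl⟩ := hy
      · exact h0
      · exact fun hj => hempty ⟨j, hj⟩
    exact lt_irrefl (l x) (hsub (hl ▸ hx).1)
  · simp [(hmem_iff (p j) (by simp)).1 hj, hpos.ne']
  · simpa [inv_mul_lt_one₀ hpos] using hlt (p j) (by simp) hj

lemma subset_of_forall_isExposed_subset [IsTopologicalAddGroup V] [ContinuousSMul ℝ V]
    [LocallyConvexSpace ℝ V] {A B : Set V} (hA : IsClosed A) (hA_conv : Convex ℝ A) (h0 : 0 ∈ A)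
    (hB : IsCompact B)
    (h : ∀ Δ : Set V, Δ.Nonempty → IsExposed ℝ B Δ → 0 ∉ Δ → Δ ⊆ A) : B ⊆ A := by
  intro x hxB
  by_contra hxA
  obtain ⟨l, u, hlA, hlx⟩ := geometric_hahn_banach_closed_point hA_conv hA hxA
  obtain ⟨b, hbB, hb⟩ := hB.exists_isMaxOn ⟨x, hxB⟩ l.continuous.continuousOn
  have hux : u < l b := hlx.trans_le (hb hxB)
  refine (hlA b (h (l.toExposed B) ⟨b, hbB, hb⟩ ContinuousLinearMap.toExposed.isExposed ?_
    ⟨hbB, hb⟩)).not_gt hux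
  exact fun h0' => ((h0'.2 b hbB).trans_lt (hlA 0 h0)).not_gt hux

end ExposedFace

section DimensionEstimate

variable {ι : Type*} [Fintype ι]

lemma dimH_setOf_exists_exp_mul_mem_lt {R W : Submodule ℝ (ι → ℂ)}
    (hRW : Module.finrank ℝ R + Module.finrank ℝ W ≤ Module.finrank ℝ (ι → ℂ))
    {e : ι → ℂ} (he : e ∈ R) (he0 : e ≠ 0)
    (hW : ∀ t : ℝ, ∀ w ∈ W, (fun j => exp (t • e j) * w j) ∈ W) :
    dimH {c : ι → ℂ | ∃ r ∈ R, (fun j => exp (r j) * c j) ∈ W} < Module.finrank ℝ (ι → ℂ) := by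
  -- Translating `r` along `e` is absorbed by `W`, so `r` may be restricted to a complement of `e`.
  obtain ⟨φ, hφ⟩ := SeparatingDual.exists_eq_one (R := ℝ) he0
  set R₀ : Submodule ℝ (ι → ℂ) := R ⊓ LinearMap.ker φ.toLinearMap
  have hR₀ : Module.finrank ℝ R₀ < Module.finrank ℝ R :=
    Submodule.finrank_lt_finrank_of_lt <| inf_le_left.lt_of_not_ge fun h => by
      simpa [hφ] using (h he).2
  let F : R₀ × W → ι → ℂ := fun q j => exp (-q.1.1 j) * q.2.1 j
  have hF : ContDiff ℝ 1 F := by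
    refine contDiff_pi.2 fun j => ContDiff.mul (ContDiff.cexp (ContDiff.neg ?_)) ?_
    · exact ((ContinuousLinearMap.proj j).comp
        (R₀.subtypeL.comp (.fst ℝ R₀ W)) : R₀ × W →L[ℝ] ℂ).contDiff
    · exact ((ContinuousLinearMap.proj j).comp
        (W.subtypeL.comp (.snd ℝ R₀ W)) : R₀ × W →L[ℝ] ℂ).contDiff
  have hsub : {c : ι → ℂ | ∃ r ∈ R, (fun j => exp (r j) * c j) ∈ W} ⊆ Set.range F := by
    rintro c ⟨r, hr, hc⟩
    refine ⟨(⟨r - φ r • e, R.sub_mem hr (R.smul_mem _ he), by simp [hφ]⟩, ⟨_, hW (-φ r) _ hc⟩), ?_⟩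
    ext j
    simp only [F, ← mul_assoc, ← Complex.exp_add]
    simp
  calc dimH {c : ι → ℂ | ∃ r ∈ R, (fun j => exp (r j) * c j) ∈ W}
      ≤ Module.finrank ℝ (R₀ × W) := (dimH_mono hsub).trans hF.dimH_range_le
    _ < Module.finrank ℝ (ι → ℂ) := by
      rw [Module.finrank_prod]
      exact_mod_cast (Nat.add_lt_add_right hR₀ _).trans_le hRW

/-- The real bilinear form `(a, b) ↦ Re (∑ j, a j * b j)` on `ℂ^ι`. -/
def reDotForm (ι : Type*) [Fintype ι] : LinearMap.BilinForm ℝ (ι → ℂ) :=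
  (dotProductBilin ℝ ℝ).compr₂ Complex.reLm

lemma reDotForm_apply (a b : ι → ℂ) : reDotForm ι a b = (∑ j, a j * b j).re := rfl

lemma reDotForm_nondegenerate : (reDotForm ι).Nondegenerate := by
  have hsymm : (reDotForm ι).IsSymm := ⟨fun a b => by simp only [reDotForm_apply, mul_comm]⟩
  refine hsymm.isRefl.nondegenerate_iff_separatingLeft.2 fun a ha => funext fun j => ?_
  have hnorm : reDotForm ι a (star a) = ∑ j, normSq (a j) := by
    simp [reDotForm_apply, mul_conj]
  rw [ha, eq_comm, sum_eq_zero_iff_of_nonneg fun j _ => normSq_nonneg (a j)] at hnorm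
  exact normSq_eq_zero.1 (hnorm j (mem_univ j))

lemma mem_orthogonal_reDotForm {R : Submodule ℝ (ι → ℂ)} {b : ι → ℂ} :
    b ∈ (reDotForm ι).orthogonal R ↔ ∀ a ∈ R, (∑ j, a j * b j).re = 0 :=
  LinearMap.BilinForm.mem_orthogonal_iff

lemma finrank_add_finrank_orthogonal_reDotForm (R : Submodule ℝ (ι → ℂ)) :
    Module.finrank ℝ R + Module.finrank ℝ ((reDotForm ι).orthogonal R) =
      Module.finrank ℝ (ι → ℂ) := by
  rw [LinearMap.BilinForm.finrank_orthogonal reDotForm_nondegenerate]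
  exact Nat.add_sub_of_le R.finrank_le

lemma dimH_setOf_exists_indicator_exp_mul_mem_orthogonal_lt {R : Submodule ℝ (ι → ℂ)} (hR : 1 ∈ R)
    {S : Set ι} (hS : S.Nonempty) :
    dimH {c : ι → ℂ | ∃ r ∈ R, (fun j => exp (r j) * S.indicator c j) ∈
      (reDotForm ι).orthogonal R} < Module.finrank ℝ (ι → ℂ) := by
  set e : ι → ℂ := S.indicator 1
  set R' : Submodule ℝ (ι → ℂ) := R.map (LinearMap.mulLeft ℝ e)
  have he0 : e ≠ 0 := by
    obtain ⟨i, hi⟩ := hS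
    exact fun h => by simpa [e, hi] using congrFun h i
  have he : e ∈ R' := ⟨1, hR, by simp⟩
  have hmem : ∀ b, b ∈ (reDotForm ι).orthogonal R' ↔ e * b ∈ (reDotForm ι).orthogonal R := by
    intro b
    simp only [R', mem_orthogonal_reDotForm, Submodule.mem_map, forall_exists_index, and_imp,
      forall_apply_eq_imp_iff₂, LinearMap.mulLeft_apply, Pi.mul_apply, mul_assoc, mul_left_comm]
  have hW : ∀ t : ℝ, ∀ w ∈ (reDotForm ι).orthogonal R',
      (fun j => exp (t • e j) * w j) ∈ (reDotForm ι).orthogonal R' := by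
    intro t w hw
    rw [hmem] at hw ⊢
    convert Submodule.smul_mem _ (Real.exp t) hw using 1
    ext j
    by_cases hj : j ∈ S <;> simp [e, hj]
  refine (dimH_mono ?_).trans_lt (dimH_setOf_exists_exp_mul_mem_lt
    (finrank_add_finrank_orthogonal_reDotForm R').le he he0 hW)
  rintro c ⟨r, hr, hc⟩
  refine ⟨e * r, ⟨r, hr, rfl⟩, (hmem _).2 ?_⟩
  convert hc using 1
  ext j
  by_cases hj : j ∈ S <;> simp [e, hj]

end DimensionEstimate

lemma not_surjective_iff_exists_re_mul_eq_zero {E : Type*} [AddCommGroup E] [Module ℝ E]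
    (L : E →ₗ[ℝ] ℂ) : ¬ Function.Surjective L ↔ ∃ l : ℂ, l ≠ 0 ∧ ∀ v, (l * L v).re = 0 := by
  rw [← LinearMap.range_eq_top, ← Submodule.orthogonal_eq_bot_iff, Submodule.eq_bot_iff]
  push Not
  constructor
  · rintro ⟨w, hw, hw0⟩
    refine ⟨starRingEnd ℂ w, (map_ne_zero _).2 hw0, fun v => ?_⟩
    have := (Submodule.mem_orthogonal' _ _).1 hw (L v) ⟨v, rfl⟩
    rwa [Complex.inner, mul_comm] at this
  · rintro ⟨l, hl0, hl⟩
    refine ⟨starRingEnd ℂ l, (Submodule.mem_orthogonal' _ _).2 ?_, (map_ne_zero _).2 hl0⟩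
    rintro _ ⟨v, rfl⟩
    rw [Complex.inner, conj_conj, mul_comm, hl]

lemma exists_circle_eq_norm_mul (z : ℂ) : ∃ u : Circle, z = ‖z‖ * u :=
  ⟨Circle.exp (arg z), by rw [Circle.coe_exp, norm_mul_exp_arg_mul_I]⟩

namespace Mixed

lemma isFaceOf_iff_isExposed {n : ℕ} {C F : Set (Fin n → ℝ)} :
    IsFaceOf C F ↔ F.Nonempty ∧ IsExposed ℝ C F := by
  refine and_congr_right fun hne => ⟨?_, fun h => ?_⟩
  · rintro (rfl | ⟨a, rfl⟩)
    · exact IsExposed.refl _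
    · refine fun _ => ⟨-LinearMap.toContinuousLinearMap (Module.piEquiv (Fin n) ℝ ℝ a), ?_⟩
      simp [Module.piEquiv_apply_apply, mul_comm]
  · obtain ⟨l, rfl⟩ := h hne
    obtain ⟨a, ha⟩ := (Module.piEquiv (Fin n) ℝ ℝ).surjective (-l.toLinearMap)
    have hla : ∀ x, l x = -∑ i, a i * x i := fun x => by
      simpa [Module.piEquiv_apply_apply, mul_comm, neg_eq_iff_eq_neg] using
        (LinearMap.congr_fun ha x).symm
    exact Or.inr ⟨a, by simp [hla]⟩

section MixedMonomial

open scoped ComplexConjugate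

variable {n : ℕ} {p : (Fin n → ℕ) × (Fin n → ℕ)} {z : Fin n → ℂ}

/-- The mixed monomial `z^ν z̄^μ` with exponent pair `p = (ν, μ)`. -/
def monomial (p : (Fin n → ℕ) × (Fin n → ℕ)) (z : Fin n → ℂ) : ℂ :=
  (∏ i, z i ^ p.1 i) * ∏ i, conj (z i) ^ p.2 i

/-- The logarithmic differential `∑ i, (ν i * w i + μ i * conj (w i))` of the mixed monomial with
exponent pair `(ν, μ)`: its relative variation along the vector `(z i * w i)` at the point `z`. -/
def logDifferential (p : (Fin n → ℕ) × (Fin n → ℕ)) : (Fin n → ℂ) →ₗ[ℝ] ℂ :=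
  ∑ i, (p.1 i • LinearMap.id + p.2 i • conjAe.toLinearMap) ∘ₗ LinearMap.proj i

lemma logDifferential_apply (w : Fin n → ℂ) :
    logDifferential p w = ∑ i, (p.1 i * w i + p.2 i * conj (w i)) := by
  simp [logDifferential]

lemma logDifferential_ofReal (x : Fin n → ℝ) :
    logDifferential p (fun i => (x i : ℂ)) = (∑ i, x i * suppPt p i : ℝ) := by
  simp [logDifferential_apply, suppPt, mul_comm, mul_add]

lemma monomial_mul (z w : Fin n → ℂ) : monomial p (z * w) = monomial p z * monomial p w := by
  simp only [monomial, Pi.mul_apply, map_mul, mul_pow, prod_mul_distrib, mul_mul_mul_comm]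

lemma monomial_exp (w : Fin n → ℂ) :
    monomial p (fun i => exp (w i)) = exp (logDifferential p w) := by
  simp only [monomial, logDifferential_apply, sum_add_distrib, Complex.exp_add, Complex.exp_sum,
    ← exp_conj, Complex.exp_nat_mul]

lemma differentiable_monomial : Differentiable ℝ (monomial p) := by
  unfold monomial
  fun_prop

lemma fderiv_monomial_mul (z w : Fin n → ℂ) :
    fderiv ℝ (monomial p) z (z * w) = logDifferential p w * monomial p z := by
  let γ : ℝ → Fin n → ℂ := fun t => z * fun i => exp ((t • w) i)
  have hlin : ∀ v : ℂ, HasDerivAt (fun t : ℝ => exp (t • v)) v 0 := fun v => by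
    simpa using ((hasDerivAt_id (0 : ℝ)).smul_const v).cexp
  have hγ : HasDerivAt γ (z * w) 0 := hasDerivAt_pi.2 fun i => (hlin (w i)).const_mul (z i)
  have hγ0 : γ 0 = z := by ext i; simp [γ]
  have hcomp : HasDerivAt (monomial p ∘ γ) (fderiv ℝ (monomial p) z (z * w)) 0 := by
    simpa only [hγ0] using (differentiable_monomial (γ 0)).hasFDerivAt.comp_hasDerivAt 0 hγ
  have hexp : monomial p ∘ γ = fun t : ℝ => exp (t • logDifferential p w) * monomial p z := by
    ext t
    rw [Function.comp_apply, monomial_mul, monomial_exp, map_smul, mul_comm]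
  exact hcomp.unique (hexp ▸ (hlin _).mul_const (monomial p z))

end MixedMonomial

section TorusSingularZero

variable {ι : Type*} {n : ℕ} {pt : ι → (Fin n → ℕ) × (Fin n → ℕ)} {c : ι → ℂ}
  {z : Fin n → ℂ}

/-- The infinitesimal action on coefficients, in logarithmic coordinates, of rescaling the variables
by `exp w` and the polynomial by `exp l`. -/
def logAction (pt : ι → (Fin n → ℕ) × (Fin n → ℕ)) : (Fin n → ℂ) × ℂ →ₗ[ℝ] ι → ℂ :=
  LinearMap.pi fun j => (logDifferential (pt j)).coprod LinearMap.id

lemma logAction_apply (w : Fin n → ℂ) (l : ℂ) (j : ι) :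
    logAction pt (w, l) j = logDifferential (pt j) w + l := rfl

lemma one_mem_range_logAction : 1 ∈ LinearMap.range (logAction pt) :=
  ⟨(0, 1), funext fun j => by simp [logAction_apply]⟩

variable [Fintype ι]

/-- The mixed polynomial `∑ j, c j • z^(ν j) z̄^(μ j)`, where `pt j = (ν j, μ j)`. -/
def ofCoeffs (pt : ι → (Fin n → ℕ) × (Fin n → ℕ)) (c : ι → ℂ) : MixedCoeff n :=
  ∑ j, Finsupp.single (pt j) (c j)

lemma eval_ofCoeffs (z : Fin n → ℂ) :
    eval (ofCoeffs pt c) z = ∑ j, c j * monomial (pt j) z := by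
  simp only [eval, ofCoeffs, mul_assoc]
  rw [← Finsupp.sum_finsetSum_index (by simp) (by simp [add_mul])]
  simp [monomial]

lemma fderiv_eval_ofCoeffs_mul (z w : Fin n → ℂ) :
    fderiv ℝ (eval (ofCoeffs pt c)) z (z * w) =
      ∑ j, logDifferential (pt j) w * (c j * monomial (pt j) z) := by
  have heval : eval (ofCoeffs pt c) = fun z => ∑ j, c j * monomial (pt j) z :=
    funext eval_ofCoeffs
  rw [heval, fderiv_fun_sum fun j _ => (differentiable_monomial z).const_mul (c j)]
  simp only [fderiv_const_mul (differentiable_monomial z), _root_.sum_apply,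
    smul_apply, fderiv_monomial_mul, smul_eq_mul, mul_left_comm]

lemma trunc_ofCoeffs (Δ : Set (Fin n → ℝ)) :
    trunc (ofCoeffs pt c) Δ = ofCoeffs pt ({j | suppPt (pt j) ∈ Δ}.indicator c) := by
  classical
  refine (map_sum (Finsupp.filterAddHom (M := ℂ) fun p => suppPt p ∈ Δ) _ _).trans ?_
  refine sum_congr rfl fun j _ => ?_
  by_cases hj : suppPt (pt j) ∈ Δ <;> simp [Finsupp.filterAddHom, hj]

/-- `f` has a zero in the torus `(ℂ*)ⁿ` which is a critical point of `f`. -/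
def HasTorusSingularZero (f : MixedCoeff n) : Prop :=
  ∃ z : Fin n → ℂ, (∀ i, z i ≠ 0) ∧ eval f z = 0 ∧ z ∈ Sing f

lemma mem_orthogonal_range_logAction_iff {b : ι → ℂ} :
    b ∈ (reDotForm ι).orthogonal (LinearMap.range (logAction pt)) ↔
      ∑ j, b j = 0 ∧ ∀ w, (∑ j, logDifferential (pt j) w * b j).re = 0 := by
  simp only [mem_orthogonal_reDotForm, LinearMap.mem_range, forall_exists_index,
    forall_apply_eq_imp_iff]
  simp only [Prod.forall, logAction_apply]
  refine ⟨fun h => ⟨Complex.ext ?_ ?_, fun w => by simpa using h w 0⟩, ?_⟩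
  · simpa using h 0 1
  · simpa using h 0 I
  · rintro ⟨hsum, hre⟩ w l
    simp only [add_mul, sum_add_distrib, ← mul_sum, hsum, mul_zero, add_zero, hre w]

lemma mem_sing_ofCoeffs_iff (hz : ∀ i, z i ≠ 0) :
    z ∈ Sing (ofCoeffs pt c) ↔ ∃ l : ℂ, l ≠ 0 ∧
      ∀ w, (∑ j, logDifferential (pt j) w * (l * (c j * monomial (pt j) z))).re = 0 := by
  have hsurj : Function.Surjective fun w : Fin n → ℂ => z * w := fun v =>
    ⟨v / z, funext fun i => mul_div_cancel₀ (v i) (hz i)⟩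
  have hcomm : ∀ (l : ℂ) w, ∑ j, logDifferential (pt j) w * (l * (c j * monomial (pt j) z)) =
      l * fderiv ℝ (eval (ofCoeffs pt c)) z (z * w) := fun l w => by
    simp only [fderiv_eval_ofCoeffs_mul, mul_sum, mul_left_comm]
  simp only [hcomm]
  rw [Sing, Set.mem_ofPred_eq, ← ContinuousLinearMap.coe_coe,
    not_surjective_iff_exists_re_mul_eq_zero]
  exact exists_congr fun l => and_congr_right fun _ => hsurj.forall

lemma hasTorusSingularZero_ofCoeffs_iff :
    HasTorusSingularZero (ofCoeffs pt c) ↔ ∃ (z : Fin n → ℂ) (l : ℂ), (∀ i, z i ≠ 0) ∧ l ≠ 0 ∧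
      (fun j => l * (c j * monomial (pt j) z)) ∈
        (reDotForm ι).orthogonal (LinearMap.range (logAction pt)) := by
  simp only [mem_orthogonal_range_logAction_iff, ← mul_sum, ← eval_ofCoeffs]
  constructor
  · rintro ⟨z, hz, heval, hsing⟩
    obtain ⟨l, hl, hre⟩ := (mem_sing_ofCoeffs_iff hz).1 hsing
    exact ⟨z, l, hz, hl, by simp [heval], hre⟩
  · rintro ⟨z, l, hz, hl, heval, hre⟩
    exact ⟨z, hz, (mul_eq_zero_iff_left hl).1 heval, (mem_sing_ofCoeffs_iff hz).2 ⟨l, hl, hre⟩⟩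

lemma HasTorusSingularZero.exists_exp (h : HasTorusSingularZero (ofCoeffs pt c)) :
    ∃ r ∈ LinearMap.range (logAction pt), (fun j => exp (r j) * c j) ∈
      (reDotForm ι).orthogonal (LinearMap.range (logAction pt)) := by
  obtain ⟨z, l, hz, hl, hmem⟩ := hasTorusSingularZero_ofCoeffs_iff.1 h
  refine ⟨_, ⟨(fun i => log (z i), log l), rfl⟩, ?_⟩
  convert hmem using 2 with j
  rw [logAction_apply, Complex.exp_add, ← monomial_exp]
  simp only [exp_log hl, exp_log (hz _)]
  ring

lemma monomial_exp_ofReal_mul (x : Fin n → ℝ) (u : Fin n → ℂ) (p : (Fin n → ℕ) × (Fin n → ℕ)) :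
    monomial p ((fun i => exp (x i)) * u) =
      Real.exp (Module.piEquiv (Fin n) ℝ ℝ x (suppPt p)) * monomial p u := by
  rw [monomial_mul, monomial_exp, logDifferential_ofReal, ofReal_exp]
  simp [Module.piEquiv_apply_apply, mul_comm]

lemma hasTorusSingularZero_ofCoeffs_iff_polar :
    HasTorusSingularZero (ofCoeffs pt c) ↔
      ∃ (u : Fin n → Circle) (v : Circle) (x : Module.Dual ℝ (Fin n → ℝ)),
        (fun j => Real.exp (x (suppPt (pt j))) • (v * monomial (pt j) (fun i => u i) * c j)) ∈
          (reDotForm ι).orthogonal (LinearMap.range (logAction pt)) := by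
  rw [hasTorusSingularZero_ofCoeffs_iff]
  constructor
  · rintro ⟨z, l, hz, hl, hmem⟩
    choose u hu using fun i => exists_circle_eq_norm_mul (z i)
    obtain ⟨v, hv⟩ := exists_circle_eq_norm_mul l
    have hz_eq : z = (fun i => exp (Real.log ‖z i‖ : ℝ)) * fun i => (u i : ℂ) := by
      ext i
      rw [Pi.mul_apply, ← ofReal_exp, Real.exp_log (norm_pos_iff.2 (hz i)), ← hu i]
    refine ⟨u, v, Module.piEquiv (Fin n) ℝ ℝ fun i => Real.log ‖z i‖, ?_⟩
    refine (Submodule.smul_mem_iff _ (norm_ne_zero_iff.2 hl)).1 ?_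
    convert hmem using 1
    ext j
    have hmono := monomial_exp_ofReal_mul (fun i => Real.log ‖z i‖) (fun i => (u i : ℂ)) (pt j)
    rw [← hz_eq] at hmono
    rw [Pi.smul_apply, real_smul, real_smul]
    linear_combination -(c j * monomial (pt j) z) * hv - ‖l‖ * v * c j * hmono
  · rintro ⟨u, v, x, hmem⟩
    obtain ⟨x, rfl⟩ := (Module.piEquiv (Fin n) ℝ ℝ).surjective x
    refine ⟨(fun i => exp (x i)) * fun i => (u i : ℂ), v, by simp, by simp, ?_⟩
    convert hmem using 2 with j
    rw [monomial_exp_ofReal_mul, real_smul]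
    ring

lemma isClosed_setOf_hasTorusSingularZero_indicator
    (pt : ι → (Fin n → ℕ) × (Fin n → ℕ)) :
    IsClosed {c : ι → ℂ | ∃ S, IsOuterFace (fun j => suppPt (pt j)) S ∧
      HasTorusSingularZero (ofCoeffs pt (S.indicator c))} := by
  let b : ((Fin n → Circle) × Circle) × (ι → ℂ) → ι → ℂ := fun q j =>
    q.1.2 * monomial (pt j) (fun i => q.1.1 i) * q.2 j
  have hb : Continuous b := by
    refine continuous_pi fun j => ?_
    have hmono : Continuous fun u : Fin n → Circle => monomial (pt j) fun i => (u i : ℂ) :=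
      differentiable_monomial.continuous.comp (by fun_prop)
    exact ((continuous_subtype_val.comp (by fun_prop)).mul
      (hmono.comp (by fun_prop))).mul (by fun_prop)
  have hclosed := (isClosed_setOf_exists_isOuterFace_exp_smul_mem (fun j => suppPt (pt j))
    (Submodule.closed_of_finiteDimensional
      ((reDotForm ι).orthogonal (LinearMap.range (logAction pt))))).preimage hb
  convert isClosedMap_snd_of_compactSpace _ hclosed using 1
  ext c
  have hind : ∀ (S : Set ι) (x : Module.Dual ℝ (Fin n → ℝ)) (u : Fin n → Circle) (v : Circle),
      (fun j => Real.exp (x (suppPt (pt j))) •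
        (v * monomial (pt j) (fun i => u i) * S.indicator c j)) =
      S.indicator fun j => Real.exp (x (suppPt (pt j))) • b ((u, v), c) j := fun S x u v => by
    ext j
    by_cases hj : j ∈ S <;> simp [b, hj]
  simp only [hasTorusSingularZero_ofCoeffs_iff_polar]
  constructor
  · rintro ⟨S, hS, u, v, x, hmem⟩
    exact ⟨((u, v), c), ⟨S, hS, x, hind S x u v ▸ hmem⟩, rfl⟩
  · rintro ⟨⟨⟨u, v⟩, c⟩, ⟨S, hS, x, hmem⟩, rfl⟩
    exact ⟨S, hS, u, v, x, (hind S x u v).symm ▸ hmem⟩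

lemma dense_compl_setOf_hasTorusSingularZero_indicator
    (pt : ι → (Fin n → ℕ) × (Fin n → ℕ)) :
    Dense {c : ι → ℂ | ∃ S : Set ι, S.Nonempty ∧
      HasTorusSingularZero (ofCoeffs pt (S.indicator c))}ᶜ := by
  rcases isEmpty_or_nonempty ι with hι | ⟨⟨i⟩⟩
  · simp [Set.Nonempty]
  let s (S : {S : Set ι // S.Nonempty}) : Set (ι → ℂ) :=
    {c | HasTorusSingularZero (ofCoeffs pt (S.1.indicator c))}
  have hs : ∀ S, dimH (s S) < Module.finrank ℝ (ι → ℂ) := fun S =>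
    (dimH_mono fun c hc => hc.exists_exp).trans_lt
      (dimH_setOf_exists_indicator_exp_mul_mem_orthogonal_lt one_mem_range_logAction S.2)
  have hunion : {c : ι → ℂ | ∃ S : Set ι, S.Nonempty ∧
      HasTorusSingularZero (ofCoeffs pt (S.indicator c))} = ⋃ S, s S := by
    ext c
    simp [s]
  rw [hunion]
  refine dense_compl_of_dimH_lt_finrank ?_
  have : Nonempty {S : Set ι // S.Nonempty} := ⟨⟨{i}, Set.singleton_nonempty i⟩⟩
  obtain ⟨S, hS⟩ := exists_eq_ciSup_of_finite (f := fun S => dimH (s S))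
  rw [dimH_iUnion, ← hS]
  exact hs S

end TorusSingularZero

section NewtonPolytope

variable {ι : Type*} [Fintype ι] {n : ℕ} {pt : ι → (Fin n → ℕ) × (Fin n → ℕ)} {c : ι → ℂ}

/-- The Newton polyhedron at infinity of a mixed polynomial in which all the exponent pairs `pt j`
do occur. -/
def newtonPolytope (pt : ι → (Fin n → ℕ) × (Fin n → ℕ)) : Set (Fin n → ℝ) :=
  convexHull ℝ (insert 0 (Set.range fun j => suppPt (pt j)))

lemma suppPts_ofCoeffs_subset : suppPts (ofCoeffs pt c) ⊆ Set.range fun j => suppPt (pt j) := by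
  classical
  rintro _ ⟨p, hp, rfl⟩
  obtain ⟨j, -, hj⟩ := mem_biUnion.1 (Finsupp.support_finsetSum hp)
  rw [mem_singleton.1 (Finsupp.support_single_subset hj)]
  exact ⟨j, rfl⟩

lemma gamma0_ofCoeffs_subset : Gamma0 (ofCoeffs pt c) ⊆ newtonPolytope pt :=
  convexHull_mono (Set.insert_subset_insert suppPts_ofCoeffs_subset)

/-- The union of the faces of `newtonPolytope pt` not containing the origin: the set `Γ` attached to
the exponent pairs `pt j`. -/
def newtonBoundary (pt : ι → (Fin n → ℕ) × (Fin n → ℕ)) : Set (Fin n → ℝ) :=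
  {x | ∃ Δ, IsFaceOf (newtonPolytope pt) Δ ∧ 0 ∉ Δ ∧ x ∈ Δ}

/-- The set `U_Γ` of the coefficients of the Newton non-degenerate mixed polynomials with exponent
pairs `pt j` and with Newton boundary `newtonBoundary pt`. -/
def nonDegCoeffs (pt : ι → (Fin n → ℕ) × (Fin n → ℕ)) : Set (ι → ℂ) :=
  {c | GammaPlusSet (ofCoeffs pt c) = newtonBoundary pt ∧ NewtonNonDeg (ofCoeffs pt c)}

lemma gammaPlusSet_ofCoeffs_eq_iff :
    GammaPlusSet (ofCoeffs pt c) = newtonBoundary pt ↔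
      Gamma0 (ofCoeffs pt c) = newtonPolytope pt := by
  refine ⟨fun h => gamma0_ofCoeffs_subset.antisymm ?_, fun h => ?_⟩
  · have hfin : (insert 0 (suppPts (ofCoeffs pt c))).Finite :=
      ((finite_toSet _).image _).insert 0
    refine subset_of_forall_isExposed_subset (hfin.isClosed_convexHull ℝ) (convex_convexHull ℝ _)
      (subset_convexHull ℝ _ (Set.mem_insert 0 _))
      (((Set.finite_range _).insert 0).isCompact_convexHull ℝ) fun Δ hne hΔ h0 x hx => ?_
    obtain ⟨Δ', ⟨hΔ', -⟩, hx'⟩ : x ∈ GammaPlusSet (ofCoeffs pt c) :=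
      h ▸ ⟨Δ, isFaceOf_iff_isExposed.2 ⟨hne, hΔ⟩, h0, hx⟩
    exact (isFaceOf_iff_isExposed.1 hΔ').2.subset hx'
  · simp [GammaPlusSet, newtonBoundary, IsGammaPlusFace, h, and_assoc]

lemma newtonNonDeg_ofCoeffs_iff (h : Gamma0 (ofCoeffs pt c) = newtonPolytope pt) :
    NewtonNonDeg (ofCoeffs pt c) ↔ ¬ ∃ S, IsOuterFace (fun j => suppPt (pt j)) S ∧
      HasTorusSingularZero (ofCoeffs pt (S.indicator c)) := by
  have hface : NewtonNonDeg (ofCoeffs pt c) ↔ ∀ Δ, IsGammaPlusFace (ofCoeffs pt c) Δ →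
      ¬ HasTorusSingularZero (ofCoeffs pt (((fun j => suppPt (pt j)) ⁻¹' Δ).indicator c)) := by
    simp [NewtonNonDeg, HasTorusSingularZero, trunc_ofCoeffs, Set.preimage]
  simp only [hface, IsGammaPlusFace, isFaceOf_iff_isExposed, h, not_exists, not_and]
  refine ⟨fun hnd S hS => ?_, fun hnd Δ hΔ => ?_⟩
  · obtain ⟨Δ, hne, hexp, h0, rfl⟩ := hS.exists_isExposed
    exact hnd Δ ⟨⟨hne, hexp⟩, h0⟩
  · exact hnd _ (isOuterFace_preimage_of_isExposed hΔ.1.1 hΔ.1.2 hΔ.2)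

lemma gamma0_ofCoeffs_eq_of_forall_ne_zero (h : ∀ j, ofCoeffs pt c (pt j) ≠ 0) :
    Gamma0 (ofCoeffs pt c) = newtonPolytope pt := by
  refine gamma0_ofCoeffs_subset.antisymm (convexHull_mono (Set.insert_subset_insert ?_))
  rintro _ ⟨j, rfl⟩
  exact ⟨pt j, Finsupp.mem_support_iff.2 (h j), rfl⟩

open Classical in
lemma ofCoeffs_apply (p : (Fin n → ℕ) × (Fin n → ℕ)) :
    ofCoeffs pt c p = ∑ j with pt j = p, c j := by
  simp [ofCoeffs, Finsupp.single_apply, sum_filter]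

lemma continuous_ofCoeffs_apply (p : (Fin n → ℕ) × (Fin n → ℕ)) :
    Continuous fun c : ι → ℂ => ofCoeffs pt c p := by
  classical
  simp only [ofCoeffs_apply]
  fun_prop

lemma isOpen_setOf_gamma0_ofCoeffs_eq (pt : ι → (Fin n → ℕ) × (Fin n → ℕ)) :
    IsOpen {c | Gamma0 (ofCoeffs pt c) = newtonPolytope pt} := by
  refine isOpen_iff_mem_nhds.2 fun c hc => ?_
  have hne : ∀ᶠ c' in nhds c, ∀ p ∈ (ofCoeffs pt c).support, ofCoeffs pt c' p ≠ 0 :=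
    (eventually_all_finset _).2 fun p hp =>
      (continuous_ofCoeffs_apply p).continuousAt.eventually_ne (Finsupp.mem_support_iff.1 hp)
  filter_upwards [hne] with c' hc'
  refine gamma0_ofCoeffs_subset.antisymm (Eq.trans_subset hc.symm ?_)
  exact convexHull_mono <| Set.insert_subset_insert <| Set.image_mono fun p hp =>
    Finsupp.mem_support_iff.2 (hc' p hp)

lemma dense_setOf_gamma0_ofCoeffs_eq (pt : ι → (Fin n → ℕ) × (Fin n → ℕ)) :
    Dense {c | Gamma0 (ofCoeffs pt c) = newtonPolytope pt} := by
  classical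
  have hdense : ∀ j, Dense {c : ι → ℂ | ofCoeffs pt c (pt j) ≠ 0} := fun j => by
    let L : (ι → ℂ) →ₗ[ℂ] ℂ := ∑ k with pt k = pt j, LinearMap.proj k
    have hL : ∀ c, ofCoeffs pt c (pt j) = L c := fun c => by simp [L, ofCoeffs_apply]
    have hsurj : Function.Surjective L := fun a => ⟨Pi.single j a, by simp [L]⟩
    simp only [hL]
    exact (dense_compl_singleton 0).preimage (L.isOpenMap_of_finiteDimensional hsurj)
  have hopen : ∀ j, IsOpen {c : ι → ℂ | ofCoeffs pt c (pt j) ≠ 0} := fun j =>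
    isOpen_ne_fun (continuous_ofCoeffs_apply _) continuous_const
  refine (dense_iInter_of_isOpen hopen hdense).mono fun c hc => ?_
  exact gamma0_ofCoeffs_eq_of_forall_ne_zero (Set.mem_iInter.1 hc)

lemma nonDegCoeffs_eq (pt : ι → (Fin n → ℕ) × (Fin n → ℕ)) :
    nonDegCoeffs pt = {c | Gamma0 (ofCoeffs pt c) = newtonPolytope pt} ∩
      {c | ∃ S, IsOuterFace (fun j => suppPt (pt j)) S ∧
        HasTorusSingularZero (ofCoeffs pt (S.indicator c))}ᶜ := by
  ext c
  rw [nonDegCoeffs, Set.mem_ofPred_eq, gammaPlusSet_ofCoeffs_eq_iff]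
  exact and_congr_right newtonNonDeg_ofCoeffs_iff

end NewtonPolytope

end Mixed

theorem newton_nondeg_open_dense_general {ι : Type*} [Fintype ι] {n : ℕ}
    (pt : ι → (Fin n → ℕ) × (Fin n → ℕ)) :
    IsOpen (Mixed.nonDegCoeffs pt) ∧ Dense (Mixed.nonDegCoeffs pt) := by
  rw [Mixed.nonDegCoeffs_eq]
  have hopen := Mixed.isOpen_setOf_gamma0_ofCoeffs_eq pt
  have hdense := Mixed.dense_setOf_gamma0_ofCoeffs_eq pt
  have hclosed := Mixed.isClosed_setOf_hasTorusSingularZero_indicator pt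
  refine ⟨hopen.inter hclosed.isOpen_compl, hdense.inter_of_isOpen_left ?_ hopen⟩
  refine (Mixed.dense_compl_setOf_hasTorusSingularZero_indicator pt).mono ?_
  exact Set.compl_subset_compl.2 fun c ⟨S, hS, hzero⟩ => ⟨S, hS.1, hzero⟩

/-- Newton non-degeneracy with fixed Newton boundary at infinity is an
open dense condition on the coefficients. -/
theorem newton_nondeg_open_dense {n m : ℕ} (hn : 1 ≤ n) (hm : 1 ≤ m)
    (pt : Fin m → (Fin n → ℕ) × (Fin n → ℕ)) (hpt : Function.Injective pt)
    (Gam : Set (Fin n → ℝ))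
    (hGam : Gam = {x | ∃ Δ, Mixed.IsFaceOf
        (convexHull ℝ (insert 0 (Set.range fun j => Mixed.suppPt (pt j)))) Δ ∧
        (0 : Fin n → ℝ) ∉ Δ ∧ x ∈ Δ}) :
    IsOpen {c : Fin m → ℂ |
        Mixed.GammaPlusSet (∑ j, Finsupp.single (pt j) (c j)) = Gam ∧
        Mixed.NewtonNonDeg (∑ j, Finsupp.single (pt j) (c j))} ∧
    Dense {c : Fin m → ℂ |
        Mixed.GammaPlusSet (∑ j, Finsupp.single (pt j) (c j)) = Gam ∧
        Mixed.NewtonNonDeg (∑ j, Finsupp.single (pt j) (c j))} := by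
  subst hGam
  exact newton_nondeg_open_dense_general pt
end
end

section
/- Let f : ℂⁿ → ℂ be a mixed polynomial that is convenient and Newton non-degenerate. Then S(f) = ∅. -/
open Complex Filter Finset

noncomputable section

/-- `f` is convenient: its support meets every coordinate axis. -/
def Convenient {n : ℕ} (c : MixedCoeff n) : Prop :=
  ∀ i : Fin n, ∃ k : ℕ, 1 ≤ k ∧ ∃ p ∈ c.support,
    (fun j => p.1 j + p.2 j) = fun j => if j = i then k else 0

/-! Suppose `z_k` in the Milnor set, `‖z_k‖ → ∞` and `f(z_k)` converges; pass to an ultrafilter.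
Write `log |z_k| = w_k + O(1)`, where every difference of exponents of `f` takes on `w_k` values
that are identically zero or tend to `±∞`. The exponents that are maximal on `w_k` span a face `Δ`
of `Γ₀(f)`; convenience makes their common value `d_k` tend to `∞`, so `0 ∉ Δ`. After rescaling,
`exp(-w_k) z_k` converges to a point `a₀` of the torus, and boundedness of `f(z_k)` gives
`f_Δ(a₀) = 0`.

In the coordinates `log z_i` the Milnor condition says that the gradient of `Re (m̄ f)` has
components `λ |z_i|²`. Multiplied by `exp(-d_k)`, it becomes in the limit: the logarithmic gradient
of `Re (m̄ f_Δ)` at `a₀` is a real vector `y`, whose entries all have the sign of `λ` and which is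
supported on the indices with `|z_i| → ∞`, where `w_i > 0`. Euler's relation `Σ w_i y_i = 0` then
forces `y = 0`, so `a₀ ∈ Sing f_Δ`, contradicting non-degeneracy. -/

section Ultralimits

variable {ι : Type*} (U : Ultrafilter ι)

lemma exists_tendsto_of_tendsto_norm {E : Type*} [NormedAddCommGroup E] [ProperSpace E]
    {x : ι → E} {r : ℝ} (hx : Tendsto (fun k => ‖x k‖) U (nhds r)) :
    ∃ y, ‖y‖ = r ∧ Tendsto x U (nhds y) := by
  have hbounded : ∀ᶠ k in (U : Filter ι), x k ∈ Metric.closedBall 0 (r + 1) := by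
    filter_upwards [hx.eventually_le_const (lt_add_one r)] with k hk using
      mem_closedBall_zero_iff.2 hk
  obtain ⟨y, -, hy⟩ := (isCompact_closedBall (0 : E) (r + 1)).ultrafilter_le_nhds (U.map x)
    (le_principal_iff.2 hbounded)
  exact ⟨y, tendsto_nhds_unique (Tendsto.norm hy) hx, hy⟩

lemma exists_tendsto_nhds_or_atTop_or_atBot (x : ι → ℝ) :
    (∃ t, Tendsto x U (nhds t)) ∨ Tendsto x U atTop ∨ Tendsto x U atBot := by
  obtain ⟨y, -, hy⟩ := (isCompact_univ (X := EReal)).ultrafilter_le_nhds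
    (U.map fun k => (x k : EReal)) (by simp)
  have hy : Tendsto (fun k => (x k : EReal)) U (nhds y) := hy
  induction y with
  | bot => exact .inr (.inr (EReal.tendsto_coe_nhds_bot_iff.1 hy))
  | coe t => exact .inl ⟨t, EReal.tendsto_coe.1 hy⟩
  | top => exact .inr (.inl (EReal.tendsto_coe_nhds_top_iff.1 hy))

lemma exists_forall_eq_or_tendsto_sub_atTop {κ : Type*} [Finite κ] [Nonempty κ] {g : κ → ι → ℝ}
    (hg : ∀ i j, (∀ k, g i k - g j k = 0) ∨ Tendsto (fun k => g i k - g j k) U atTop ∨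
      Tendsto (fun k => g i k - g j k) U atBot) :
    ∃ i, ∀ j, (∀ k, g j k = g i k) ∨ Tendsto (fun k => g i k - g j k) U atTop := by
  obtain ⟨i, hi⟩ := Ultrafilter.eventually_exists_iff.1
    (Eventually.of_forall (f := (U : Filter ι)) fun k => Finite.exists_max (g · k))
  refine ⟨i, fun j => ?_⟩
  rcases hg i j with heq | htop | hbot
  · exact .inl fun k => (sub_eq_zero.1 (heq k)).symm
  · exact .inr htop
  · obtain ⟨k, hneg, hmax⟩ := ((hbot.eventually_lt_atBot 0).and hi).exists
    exact absurd (hmax j) (sub_neg.1 hneg).not_ge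

end Ultralimits

lemma exists_comp_comp_eq_self {K V W : Type*} [DivisionRing K] [AddCommGroup V]
    [Module K V] [AddCommGroup W] [Module K W] (T : V →ₗ[K] W) :
    ∃ S : W →ₗ[K] V, T ∘ₗ S ∘ₗ T = T := by
  obtain ⟨g, hg⟩ := T.rangeRestrict.exists_rightInverse_of_surjective T.range_rangeRestrict
  obtain ⟨S, hS⟩ := LinearMap.exists_extend g
  refine ⟨S, LinearMap.ext fun x => ?_⟩
  have hSg : S (T x) = g (T.rangeRestrict x) := LinearMap.congr_fun hS (T.rangeRestrict x)
  simpa [hSg] using congrArg Subtype.val (LinearMap.congr_fun hg (T.rangeRestrict x))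

-- Removing from `x` its image under a generalized inverse of the functionals that stay bounded
-- along `U` makes these functionals vanish identically.
lemma exists_tendsto_sub_and_linear_dichotomy {ι κ V : Type*} [Finite κ] [AddCommGroup V]
    [Module ℝ V] [TopologicalSpace V] [IsTopologicalAddGroup V] [ContinuousSMul ℝ V]
    (U : Ultrafilter ι) (φ : κ → V →ₗ[ℝ] ℝ) (x : ι → V) :
    ∃ (w : ι → V) (u₀ : V), Tendsto (fun k => x k - w k) U (nhds u₀) ∧
      ∀ j, (∀ k, φ j (w k) = 0) ∨ Tendsto (fun k => φ j (w k)) U atTop ∨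
        Tendsto (fun k => φ j (w k)) U atBot := by
  let κ' := {j // ∃ t, Tendsto (fun k => φ j (x k)) U (nhds t)}
  let T : V →ₗ[ℝ] κ' → ℝ := LinearMap.pi fun j => φ j
  obtain ⟨S, hS⟩ := exists_comp_comp_eq_self T
  choose τ hτ using fun j : κ' => j.2
  have hTx : Tendsto (fun k => T (x k)) U (nhds τ) := tendsto_pi_nhds.2 hτ
  have hSTx (ψ : (κ' → ℝ) →ₗ[ℝ] ℝ) : Tendsto (fun k => ψ (T (x k))) U (nhds (ψ τ)) :=
    (ψ.continuous_of_finiteDimensional.tendsto τ).comp hTx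
  refine ⟨fun k => x k - S (T (x k)), S τ, ?_, fun j => ?_⟩
  · simpa [Function.comp_def] using (S.continuous_of_finiteDimensional.tendsto τ).comp hTx
  · have hsub (k : ι) : φ j (x k - S (T (x k))) = φ j (x k) + -(φ j ∘ₗ S) (T (x k)) := by
      simp [sub_eq_add_neg]
    rcases exists_tendsto_nhds_or_atTop_or_atBot U fun k => φ j (x k) with ht | htop | hbot
    · refine .inl fun k => ?_
      have hTw : T (x k - S (T (x k))) = 0 := by
        rw [map_sub, sub_eq_zero]
        exact (LinearMap.congr_fun hS (x k)).symm
      exact congrFun hTw ⟨j, ht⟩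
    · exact .inr (.inl (by simpa only [hsub] using htop.atTop_add (hSTx (φ j ∘ₗ S)).neg))
    · exact .inr (.inr (by simpa only [hsub] using hbot.atBot_add (hSTx (φ j ∘ₗ S)).neg))

section PiNorm

variable {κ E : Type*} [Fintype κ] [SeminormedAddCommGroup E]

lemma exists_norm_apply_eq_norm [Nonempty κ] (x : κ → E) : ∃ i, ‖x i‖ = ‖x‖ := by
  obtain ⟨i, hi⟩ := Finite.exists_max fun i => ‖x i‖
  exact ⟨i, (norm_le_pi_norm x i).antisymm ((pi_norm_le_iff_of_nonneg (norm_nonneg _)).2 hi)⟩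

lemma tendsto_norm_apply_atTop_of_tendsto_mul_norm_sq {ι : Type*} {l : Filter ι} {r : ι → ℝ}
    {x : ι → κ → E} {y : κ → ℝ} (hx : Tendsto (fun k => ‖x k‖) l atTop)
    (hrx : ∀ i, Tendsto (fun k => r k * ‖x k i‖ ^ 2) l (nhds (y i))) {i : κ} (hi : y i ≠ 0) :
    Tendsto (fun k => ‖x k i‖) l atTop := by
  have : Nonempty κ := ⟨i⟩
  have hr : Tendsto (fun k => |r k|) l (nhds 0) := by
    have hsum : Tendsto (fun k => ∑ j, |r k * ‖x k j‖ ^ 2|) l (nhds (∑ j, |y j|)) :=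
      tendsto_finsetSum _ fun j _ => (hrx j).abs
    refine squeeze_zero' (.of_forall fun k => abs_nonneg _) ?_
      (hsum.div_atTop ((tendsto_pow_atTop two_ne_zero).comp hx))
    filter_upwards [hx.eventually_gt_atTop 0] with k hk
    obtain ⟨j, hj⟩ := exists_norm_apply_eq_norm (x k)
    rw [Function.comp_apply, le_div_iff₀ (by positivity)]
    calc |r k| * ‖x k‖ ^ 2 = |r k * ‖x k j‖ ^ 2| := by rw [hj, abs_mul, abs_sq]
      _ ≤ ∑ j, |r k * ‖x k j‖ ^ 2| :=
        single_le_sum (f := fun j => |r k * ‖x k j‖ ^ 2|) (fun _ _ => abs_nonneg _) (mem_univ j)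
  have hr_ne : ∀ᶠ k in l, r k ≠ 0 := by
    filter_upwards [(hrx i).eventually_ne hi] with k hk using left_ne_zero_of_mul hk
  have hr_inv : Tendsto (fun k => |r k|⁻¹) l atTop :=
    (tendsto_nhdsWithin_iff.2 ⟨hr, hr_ne.mono fun k hk => abs_pos.2 hk⟩).inv_tendsto_nhdsGT_zero
  have hsq : Tendsto (fun k => ‖x k i‖ ^ 2) l atTop := by
    refine ((hrx i).abs.pos_mul_atTop (abs_pos.2 hi) hr_inv).congr' ?_
    filter_upwards [hr_ne] with k hk
    rw [abs_mul, abs_sq]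
    field_simp [abs_ne_zero.2 hk]
  exact (Real.tendsto_sqrt_atTop.comp hsq).congr fun k => Real.sqrt_sq (norm_nonneg _)

end PiNorm

lemma dense_setOf_forall_ne_zero (κ X : Type*) [TopologicalSpace X] [Zero X]
    [(nhdsWithin (0 : X) {0}ᶜ).NeBot] : Dense {z : κ → X | ∀ i, z i ≠ 0} := by
  convert dense_pi Set.univ fun (_ : κ) _ => dense_compl_singleton (0 : X) using 1
  ext z
  simp

section Monomials

variable {κ R : Type*} [Fintype κ] [DecidableEq κ]

lemma prod_pow_sub_ite [CommMonoid R] (x : κ → R) (e : κ → ℕ) (i : κ) :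
    ∏ j, x j ^ (e j - if j = i then 1 else 0)
      = x i ^ (e i - 1) * ∏ j ∈ univ.erase i, x j ^ e j := by
  rw [← mul_prod_erase univ _ (mem_univ i), if_pos rfl]
  exact congrArg _ (prod_congr rfl fun j hj => by simp [(mem_erase.1 hj).1])

lemma mul_natCast_mul_prod_pow_sub_ite [CommSemiring R] (x : κ → R) (e : κ → ℕ) (i : κ) :
    x i * (e i * ∏ j, x j ^ (e j - if j = i then 1 else 0)) = e i * ∏ j, x j ^ e j := by
  rw [prod_pow_sub_ite, ← mul_prod_erase univ (fun j => x j ^ e j) (mem_univ i)]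
  rcases e i with - | d
  · simp
  · rw [Nat.add_sub_cancel, pow_succ]
    ring

lemma hasFDerivAt_prod_pow {𝕜 E : Type*} [NontriviallyNormedField 𝕜] [NormedAddCommGroup E]
    [NormedSpace 𝕜 E] [NormedCommRing R] [NormedAlgebra 𝕜 R] {f : κ → E → R}
    {f' : κ → E →L[𝕜] R} {x : E} (hf : ∀ i, HasFDerivAt (f i) (f' i) x) (e : κ → ℕ) :
    HasFDerivAt (fun x => ∏ i, f i x ^ e i)
      (∑ i, (e i * ∏ j, f j x ^ (e j - if j = i then 1 else 0)) • f' i) x := by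
  refine (HasFDerivAt.finsetProd (g := fun i x => f i x ^ e i) fun i _ =>
    (hf i).pow (e i)).congr_fderiv (sum_congr rfl fun i _ => ?_)
  rw [smul_smul, prod_pow_sub_ite (fun j => f j x)]
  congr 1
  simp only [nsmul_eq_mul]
  ring

end Monomials

namespace Mixed

variable {n : ℕ}

/-- The mixed monomial `zᵛ z̄ᵘ` with exponent pair `p = (ν, μ)`. -/
def mono (p : (Fin n → ℕ) × (Fin n → ℕ)) (z : Fin n → ℂ) : ℂ :=
  (∏ i, z i ^ p.1 i) * ∏ i, (starRingEnd ℂ) (z i) ^ p.2 i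

lemma continuous_mono (p : (Fin n → ℕ) × (Fin n → ℕ)) : Continuous (mono p) := by
  unfold mono
  fun_prop

lemma eval_eq_sum_mono (c : MixedCoeff n) (z : Fin n → ℂ) :
    eval c z = ∑ p ∈ c.support, c p * mono p z := by
  simp only [eval, mono, Finsupp.sum, mul_assoc]

lemma continuous_eval (c : MixedCoeff n) : Continuous (eval c) := by
  simp only [funext (eval_eq_sum_mono c)]
  exact continuous_finsetSum _ fun p _ => continuous_const.mul (continuous_mono p)

lemma support_smul_subset (g : (Fin n → ℕ) × (Fin n → ℕ) → ℂ) (c : MixedCoeff n) :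
    (g • c).support ⊆ c.support := fun _ hp =>
  Finsupp.mem_support_iff.2 (right_ne_zero_of_mul (Finsupp.mem_support_iff.1 hp))

lemma eval_smul (g : (Fin n → ℕ) × (Fin n → ℕ) → ℂ) (c : MixedCoeff n) (z : Fin n → ℂ) :
    eval (g • c) z = ∑ p ∈ c.support, g p * (c p * mono p z) := by
  rw [eval_eq_sum_mono, sum_subset (support_smul_subset g c) fun _ _ hp => by
    rw [Finsupp.notMem_support_iff.1 hp, zero_mul]]
  exact sum_congr rfl fun p _ => mul_assoc _ _ _

lemma trunc_smul (g : (Fin n → ℕ) × (Fin n → ℕ) → ℂ) (c : MixedCoeff n)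
    (Δ : Set (Fin n → ℝ)) : trunc (g • c) Δ = g • trunc c Δ := by
  classical
  ext p
  simp only [trunc, Finsupp.filter_apply, Finsupp.coe_pointwise_smul, Pi.smul_apply', smul_ite,
    smul_zero]

/-- The coefficients of the mixed polynomial `z_i ∂f/∂z_i`. -/
abbrev eulerZ (i : Fin n) (c : MixedCoeff n) : MixedCoeff n :=
  (fun p : (Fin n → ℕ) × (Fin n → ℕ) => (p.1 i : ℂ)) • c

/-- The coefficients of the mixed polynomial `z̄_i ∂f/∂z̄_i`. -/
abbrev eulerZbar (i : Fin n) (c : MixedCoeff n) : MixedCoeff n :=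
  (fun p : (Fin n → ℕ) × (Fin n → ℕ) => (p.2 i : ℂ)) • c

lemma eval_eulerZ (i : Fin n) (c : MixedCoeff n) (z : Fin n → ℂ) :
    eval (eulerZ i c) z = z i * dz c i z := by
  rw [eval_smul, dz, Finsupp.sum, mul_sum]
  refine sum_congr rfl fun p _ => ?_
  rw [mono]
  linear_combination (-(c p * ∏ j, (starRingEnd ℂ) (z j) ^ p.2 j)) *
    mul_natCast_mul_prod_pow_sub_ite z p.1 i

lemma eval_eulerZbar (i : Fin n) (c : MixedCoeff n) (z : Fin n → ℂ) :
    eval (eulerZbar i c) z = (starRingEnd ℂ) (z i) * dzbar c i z := by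
  rw [eval_smul, dzbar, Finsupp.sum, mul_sum]
  refine sum_congr rfl fun p _ => ?_
  rw [mono]
  linear_combination (-(c p * ∏ j, z j ^ p.1 j)) *
    mul_natCast_mul_prod_pow_sub_ite (fun j => (starRingEnd ℂ) (z j)) p.2 i

lemma sum_mul_eval_euler_of_dotProduct_eq {c : MixedCoeff n} {w : Fin n → ℝ} {d : ℝ}
    (h : ∀ p ∈ c.support, w ⬝ᵥ suppPt p = d) (z : Fin n → ℂ) :
    ∑ i, (w i : ℂ) * (eval (eulerZ i c) z + eval (eulerZbar i c) z) = d * eval c z := by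
  simp only [eval_smul, eval_eq_sum_mono c, ← sum_add_distrib, mul_sum]
  rw [sum_comm]
  refine sum_congr rfl fun p hp => ?_
  rw [← h p hp, dotProduct, ofReal_sum, sum_mul]
  refine sum_congr rfl fun i _ => ?_
  simp only [suppPt, ofReal_mul, ofReal_natCast, Nat.cast_add, ofReal_add]
  ring

lemma hasFDerivAt_mono (p : (Fin n → ℕ) × (Fin n → ℕ)) (z : Fin n → ℂ) :
    HasFDerivAt (mono p)
      ((∏ i, z i ^ p.1 i) •
        (∑ i, (p.2 i * ∏ j, (starRingEnd ℂ) (z j) ^ (p.2 j - if j = i then 1 else 0)) •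
          (conjCLE.toContinuousLinearMap ∘L
            (ContinuousLinearMap.proj i : (Fin n → ℂ) →L[ℝ] ℂ))) +
      (∏ i, (starRingEnd ℂ) (z i) ^ p.2 i) •
        (∑ i, (p.1 i * ∏ j, z j ^ (p.1 j - if j = i then 1 else 0)) •
          (ContinuousLinearMap.proj i : (Fin n → ℂ) →L[ℝ] ℂ))) z :=
  (hasFDerivAt_prod_pow (fun i => (ContinuousLinearMap.proj i :
    (Fin n → ℂ) →L[ℝ] ℂ).hasFDerivAt) p.1).mul
  (hasFDerivAt_prod_pow (fun i => (conjCLE.toContinuousLinearMap ∘L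
    (ContinuousLinearMap.proj i : (Fin n → ℂ) →L[ℝ] ℂ)).hasFDerivAt) p.2)

lemma hasFDerivAt_eval (c : MixedCoeff n) (z : Fin n → ℂ) :
    HasFDerivAt (eval c) (∑ i,
      (dz c i z • (ContinuousLinearMap.proj i : (Fin n → ℂ) →L[ℝ] ℂ) +
        dzbar c i z • (conjCLE.toContinuousLinearMap ∘L ContinuousLinearMap.proj i))) z := by
  rw [funext (eval_eq_sum_mono c)]
  refine (HasFDerivAt.fun_sum fun p _ =>
    (hasFDerivAt_mono p z).const_mul (c p)).congr_fderiv ?_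
  ext v
  simp only [dz, dzbar, Finsupp.sum, _root_.sum_apply, add_apply,
    smul_apply, smul_eq_mul, sum_mul, mul_sum, ← sum_add_distrib]
  rw [sum_comm]
  exact sum_congr rfl fun i _ => sum_congr rfl fun p _ => by ring

/-- Twice the `∂/∂z̄`-gradient of the real function `Re (m̄ f)`, whose proportionality to `z`
defines the Milnor set. -/
def mixedGrad (c : MixedCoeff n) (m : ℂ) (i : Fin n) (z : Fin n → ℂ) : ℂ :=
  m * (starRingEnd ℂ) (dz c i z) + (starRingEnd ℂ) m * dzbar c i z

lemma re_conj_mul_fderiv_eval (c : MixedCoeff n) (m : ℂ) (z v : Fin n → ℂ) :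
    ((starRingEnd ℂ) m * fderiv ℝ (eval c) z v).re
      = ∑ i, ((starRingEnd ℂ) (v i) * mixedGrad c m i z).re := by
  simp only [(hasFDerivAt_eval c z).fderiv, _root_.sum_apply, mul_sum, re_sum]
  refine sum_congr rfl fun i _ => ?_
  simp [mixedGrad]
  ring

lemma mem_Sing_of_mixedGrad_eq_zero {c : MixedCoeff n} {m : ℂ} (hm : m ≠ 0) {z : Fin n → ℂ}
    (h : ∀ i, mixedGrad c m i z = 0) : z ∈ Sing c := by
  intro hsurj
  obtain ⟨v, hv⟩ := hsurj m
  have hnormSq : ((starRingEnd ℂ) m * m).re = 0 := by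
    simpa [hv, h] using re_conj_mul_fderiv_eval c m z v
  rw [← normSq_eq_conj_mul_self, ofReal_re] at hnormSq
  exact hm (normSq_eq_zero.1 hnormSq)

/-- The logarithmic gradient: the gradient of `Re (m̄ f)` in the coordinates `log z_i` of the
torus. Unlike `mixedGrad`, it has the same monomials as `f`. -/
def logGrad (c : MixedCoeff n) (m : ℂ) (i : Fin n) (z : Fin n → ℂ) : ℂ :=
  m * (starRingEnd ℂ) (eval (eulerZ i c) z) + (starRingEnd ℂ) m * eval (eulerZbar i c) z

lemma logGrad_eq_conj_mul_mixedGrad (c : MixedCoeff n) (m : ℂ) (i : Fin n) (z : Fin n → ℂ) :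
    logGrad c m i z = (starRingEnd ℂ) (z i) * mixedGrad c m i z := by
  rw [logGrad, mixedGrad, eval_eulerZ, eval_eulerZbar, map_mul]
  ring

lemma mem_Sing_of_logGrad_eq_zero {c : MixedCoeff n} {m : ℂ} (hm : m ≠ 0) {z : Fin n → ℂ}
    (hz : ∀ i, z i ≠ 0) (h : ∀ i, logGrad c m i z = 0) : z ∈ Sing c :=
  mem_Sing_of_mixedGrad_eq_zero hm fun i => by
    simpa [logGrad_eq_conj_mul_mixedGrad, hz i] using h i

lemma sum_mul_re_logGrad_of_dotProduct_eq {c : MixedCoeff n} {w : Fin n → ℝ} {d : ℝ}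
    (h : ∀ p ∈ c.support, w ⬝ᵥ suppPt p = d) (m : ℂ) (z : Fin n → ℂ) :
    ∑ i, w i * (logGrad c m i z).re = d * ((starRingEnd ℂ) m * eval c z).re := by
  calc ∑ i, w i * (logGrad c m i z).re
      = ((starRingEnd ℂ) m *
          ∑ i, (w i : ℂ) * (eval (eulerZ i c) z + eval (eulerZbar i c) z)).re := by
        rw [mul_sum, re_sum]
        refine sum_congr rfl fun i _ => ?_
        simp [logGrad]
        ring
    _ = d * ((starRingEnd ℂ) m * eval c z).re := by
        rw [sum_mul_eval_euler_of_dotProduct_eq h, mul_left_comm, re_ofReal_mul]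

lemma continuous_logGrad (c : MixedCoeff n) (m : ℂ) (i : Fin n) : Continuous (logGrad c m i) :=
  (continuous_const.mul (continuous_conj.comp (continuous_eval _))).add
    (continuous_const.mul (continuous_eval _))

lemma exists_logGrad_eq_of_mem_Milnor {c : MixedCoeff n} {z : Fin n → ℂ} (hz : z ∈ Milnor c) :
    ∃ (l : ℝ) (m : ℂ), ‖m‖ = 1 ∧ ∀ i, logGrad c m i z = (l * ‖z i‖ ^ 2 : ℝ) := by
  obtain ⟨l, m, hm, h⟩ := hz
  refine ⟨l / ‖m‖, m / ‖m‖, by simp [hm], fun i => ?_⟩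
  have hi : (l : ℂ) * z i = mixedGrad c m i z := h i
  calc logGrad c (m / ‖m‖) i z = (starRingEnd ℂ) (z i) * (mixedGrad c m i z / ‖m‖) := by
        rw [logGrad_eq_conj_mul_mixedGrad, mixedGrad, mixedGrad, map_div₀, conj_ofReal]
        ring
    _ = (l / ‖m‖ * ‖z i‖ ^ 2 : ℝ) := by
        push_cast
        rw [← hi, ← conj_mul']
        ring

-- Points with vanishing coordinates would require truncations to coordinate subspaces; since
-- only limits matter, they are moved slightly into the torus instead.
lemma exists_torus_approx_of_mem_Milnor {c : MixedCoeff n} {z : Fin n → ℂ} (hz : z ∈ Milnor c)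
    {ε : ℝ} (hε : 0 < ε) :
    ∃ (z' : Fin n → ℂ) (l : ℝ) (m : ℂ), (∀ i, z' i ≠ 0) ∧ ‖m‖ = 1 ∧ ‖z' - z‖ < ε ∧
      ‖eval c z' - eval c z‖ < ε ∧ ∀ i, ‖logGrad c m i z' - (l * ‖z' i‖ ^ 2 : ℝ)‖ < ε := by
  obtain ⟨l, m, hm, hlog⟩ := exists_logGrad_eq_of_mem_Milnor hz
  have hsub : ∀ᶠ z' in nhds z, ‖z' - z‖ < ε :=
    (continuous_id.sub continuous_const).norm.continuousAt.tendsto.eventually_lt_const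
      (by simpa)
  have heval : ∀ᶠ z' in nhds z, ‖eval c z' - eval c z‖ < ε :=
    ((continuous_eval c).sub continuous_const).norm.continuousAt.tendsto.eventually_lt_const
      (by simpa)
  have hdefect : ∀ᶠ z' in nhds z, ∀ i, ‖logGrad c m i z' - (l * ‖z' i‖ ^ 2 : ℝ)‖ < ε := by
    have hcont (i : Fin n) : Continuous fun z' : Fin n → ℂ => ((l * ‖z' i‖ ^ 2 : ℝ) : ℂ) := by
      fun_prop
    exact eventually_all.2 fun i =>
      (((continuous_logGrad c m i).sub (hcont i)).norm.tendsto z).eventually_lt_const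
        (by simpa [hlog i])
  obtain ⟨z', hz', hz'sub, hz'eval, hz'log⟩ :=
    (dense_setOf_forall_ne_zero (Fin n) ℂ).inter_nhds_nonempty
      (hsub.and (heval.and hdefect))
  exact ⟨z', l, m, hz', hm, hz'sub, hz'eval, hz'log⟩

/-- The action on `ℂⁿ` of the positive real torus, written in logarithmic coordinates. -/
def scale (w : Fin n → ℝ) (z : Fin n → ℂ) : Fin n → ℂ := fun i => Real.exp (w i) • z i

lemma scale_scale_neg (w : Fin n → ℝ) (z : Fin n → ℂ) : scale w (scale (-w) z) = z := by
  funext i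
  simp only [scale, smul_smul, ← Real.exp_add, Pi.neg_apply, add_neg_cancel, Real.exp_zero,
    one_smul]

lemma norm_scale_apply (w : Fin n → ℝ) (z : Fin n → ℂ) (i : Fin n) :
    ‖scale w z i‖ = Real.exp (w i) * ‖z i‖ := by
  rw [scale, norm_smul, Real.norm_eq_abs, Real.abs_exp]

lemma mono_scale (p : (Fin n → ℕ) × (Fin n → ℕ)) (w : Fin n → ℝ) (z : Fin n → ℂ) :
    mono p (scale w z) = Real.exp (w ⬝ᵥ suppPt p) • mono p z := by
  have hexp : Real.exp (w ⬝ᵥ suppPt p)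
      = (∏ i, Real.exp (w i) ^ p.1 i) * ∏ i, Real.exp (w i) ^ p.2 i := by
    simp only [dotProduct, suppPt, mul_comm (w _), Real.exp_sum, Real.exp_nat_mul, pow_add,
      prod_mul_distrib]
  rw [hexp, real_smul]
  simp only [mono, scale, real_smul, map_mul, conj_ofReal, mul_pow, prod_mul_distrib]
  push_cast
  ring

/-- Along `l`, the monomials of `f` with exponents in `Δ` are the dominant ones at `z`, in the
following precise sense. Decompose `z_k = exp(w_k) · a_k`; then `a_k` tends to a point `a₀` of the
torus, the monomials of `Δ` all have the same growth `exp(d_k)` with `d_k → ∞`, and every other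
monomial is negligible with respect to them. -/
structure HasInitialFace {ι : Type*} (c : MixedCoeff n) (l : Filter ι) (z : ι → Fin n → ℂ)
    (Δ : Set (Fin n → ℝ)) (w : ι → Fin n → ℝ) (d : ι → ℝ) (a₀ : Fin n → ℂ) : Prop where
  tendsto_height : Tendsto d l atTop
  tendsto_scale : Tendsto (fun k => scale (-w k) (z k)) l (nhds a₀)
  limit_ne_zero : ∀ i, a₀ i ≠ 0
  dotProduct_eq : ∀ p ∈ c.support, suppPt p ∈ Δ → ∀ k, w k ⬝ᵥ suppPt p = d k
  tendsto_gap : ∀ p ∈ c.support, suppPt p ∉ Δ →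
    Tendsto (fun k => d k - w k ⬝ᵥ suppPt p) l atTop

lemma mem_support_trunc {c : MixedCoeff n} {Δ : Set (Fin n → ℝ)}
    {p : (Fin n → ℕ) × (Fin n → ℕ)} :
    p ∈ (trunc c Δ).support ↔ p ∈ c.support ∧ suppPt p ∈ Δ := by
  classical
  simp only [trunc, Finsupp.support_filter, Finset.mem_filter]

lemma eval_trunc (c : MixedCoeff n) (Δ : Set (Fin n → ℝ)) [DecidablePred (suppPt · ∈ Δ)]
    (z : Fin n → ℂ) :
    eval (trunc c Δ) z = ∑ p ∈ c.support, c p * if suppPt p ∈ Δ then mono p z else 0 := by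
  rw [eval_eq_sum_mono, trunc, Finsupp.support_filter, sum_filter]
  refine sum_congr (by congr) fun p _ => ?_
  split_ifs with hp <;> simp [hp]

namespace HasInitialFace

variable {ι : Type*} {l : Filter ι} {c : MixedCoeff n} {z : ι → Fin n → ℂ}
  {Δ : Set (Fin n → ℝ)} {w : ι → Fin n → ℝ} {d : ι → ℝ} {a₀ : Fin n → ℂ}

lemma of_support_subset (h : HasInitialFace c l z Δ w d a₀) {c' : MixedCoeff n}
    (hc' : c'.support ⊆ c.support) : HasInitialFace c' l z Δ w d a₀ :=
  { h with
    dotProduct_eq := fun p hp => h.dotProduct_eq p (hc' hp)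
    tendsto_gap := fun p hp => h.tendsto_gap p (hc' hp) }

lemma tendsto_exp_neg_smul_mono (h : HasInitialFace c l z Δ w d a₀)
    [DecidablePred (suppPt · ∈ Δ)] {p : (Fin n → ℕ) × (Fin n → ℕ)} (hp : p ∈ c.support) :
    Tendsto (fun k => Real.exp (-d k) • mono p (z k)) l
      (nhds (if suppPt p ∈ Δ then mono p a₀ else 0)) := by
  have hmono : Tendsto (fun k => mono p (scale (-w k) (z k))) l (nhds (mono p a₀)) :=
    ((continuous_mono p).tendsto a₀).comp h.tendsto_scale
  have hrescale (k : ι) : Real.exp (-d k) • mono p (z k)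
      = Real.exp (-(d k - w k ⬝ᵥ suppPt p)) • mono p (scale (-w k) (z k)) := by
    rw [← scale_scale_neg (w k) (z k), mono_scale, scale_scale_neg, smul_smul, ← Real.exp_add]
    ring_nf
  simp only [hrescale]
  split_ifs with hΔ
  · simpa [h.dotProduct_eq p hp hΔ] using hmono
  · simpa using
      (Real.tendsto_exp_atBot.comp (tendsto_neg_atTop_atBot.comp (h.tendsto_gap p hp hΔ))).smul
        hmono

lemma tendsto_exp_neg_smul_eval (h : HasInitialFace c l z Δ w d a₀) :
    Tendsto (fun k => Real.exp (-d k) • eval c (z k)) l (nhds (eval (trunc c Δ) a₀)) := by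
  classical
  simp only [eval_trunc, eval_eq_sum_mono c, smul_sum, ← mul_smul_comm]
  exact tendsto_finsetSum _ fun p hp => (h.tendsto_exp_neg_smul_mono hp).const_mul (c p)

lemma tendsto_exp_neg_smul_logGrad (h : HasInitialFace c l z Δ w d a₀) {m : ι → ℂ} {m₀ : ℂ}
    (hm : Tendsto m l (nhds m₀)) (i : Fin n) :
    Tendsto (fun k => Real.exp (-d k) • logGrad c (m k) i (z k)) l
      (nhds (logGrad (trunc c Δ) m₀ i a₀)) := by
  have heuler (g : (Fin n → ℕ) × (Fin n → ℕ) → ℂ) :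
      Tendsto (fun k => Real.exp (-d k) • eval (g • c) (z k)) l
        (nhds (eval (g • trunc c Δ) a₀)) := by
    simpa only [trunc_smul] using
      (h.of_support_subset (support_smul_subset g c)).tendsto_exp_neg_smul_eval
  have hconj {x : ι → ℂ} {y : ℂ} (hx : Tendsto x l (nhds y)) :
      Tendsto (fun k => (starRingEnd ℂ) (x k)) l (nhds ((starRingEnd ℂ) y)) :=
    (continuous_conj.tendsto y).comp hx
  refine ((hm.mul (hconj (heuler _))).add ((hconj hm).mul (heuler _))).congr fun k => ?_
  simp only [logGrad, real_smul, map_mul, conj_ofReal]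
  ring

lemma tendsto_exp_neg_smul_zero (h : HasInitialFace c l z Δ w d a₀) {E : Type*}
    [SeminormedAddCommGroup E] [NormedSpace ℝ E] {x : ι → E}
    (hx : IsBoundedUnder (· ≤ ·) l fun k => ‖x k‖) :
    Tendsto (fun k => Real.exp (-d k) • x k) l (nhds 0) :=
  (Real.tendsto_exp_atBot.comp (tendsto_neg_atTop_atBot.comp h.tendsto_height)
    ).zero_smul_isBoundedUnder_le hx

lemma eval_trunc_eq_zero [l.NeBot] (h : HasInitialFace c l z Δ w d a₀)
    (hz : IsBoundedUnder (· ≤ ·) l fun k => ‖eval c (z k)‖) : eval (trunc c Δ) a₀ = 0 :=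
  tendsto_nhds_unique h.tendsto_exp_neg_smul_eval (h.tendsto_exp_neg_smul_zero hz)

lemma eventually_weight_pos (h : HasInitialFace c l z Δ w d a₀) {i : Fin n}
    (hi : Tendsto (fun k => ‖z k i‖) l atTop) : ∀ᶠ k in l, 0 < w k i := by
  have hscale : Tendsto (fun k => ‖scale (-w k) (z k) i‖) l (nhds ‖a₀ i‖) :=
    (tendsto_pi_nhds.1 h.tendsto_scale i).norm
  filter_upwards [hscale.eventually_lt_const (lt_add_one _),
    hi.eventually_ge_atTop (‖a₀ i‖ + 1)] with k hlt hge
  by_contra! hw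
  have hexp : 1 ≤ Real.exp (-w k i) := Real.one_le_exp (neg_nonneg.2 hw)
  rw [norm_scale_apply, Pi.neg_apply] at hlt
  nlinarith [norm_nonneg (z k i)]

-- The numbers `y i` all have the sign of `r k`, and `y i ≠ 0` only where `w k i > 0`.
lemma eq_zero_of_sum_weight_mul_eq_zero [l.NeBot] (h : HasInitialFace c l z Δ w d a₀)
    (hz : Tendsto (fun k => ‖z k‖) l atTop) {r : ι → ℝ} {y : Fin n → ℝ}
    (hy : ∀ i, Tendsto (fun k => r k * ‖z k i‖ ^ 2) l (nhds (y i)))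
    (hsum : ∀ k, ∑ i, w k i * y i = 0) : y = 0 := by
  have hpos : ∀ᶠ k in l, ∀ i, y i ≠ 0 → 0 < w k i ∧ 0 < r k * y i := by
    refine eventually_all.2 fun i => ?_
    by_cases hi : y i = 0
    · simp [hi]
    · have hsq : ∀ᶠ k in l, 0 < r k * ‖z k i‖ ^ 2 * y i :=
        ((hy i).mul_const (y i)).eventually_const_lt (mul_self_pos.2 hi)
      filter_upwards [hsq, h.eventually_weight_pos
        (tendsto_norm_apply_atTop_of_tendsto_mul_norm_sq hz hy hi)] with k hk hw _
      refine ⟨hw, pos_of_mul_pos_left (b := ‖z k i‖ ^ 2) ?_ (sq_nonneg _)⟩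
      linarith
  obtain ⟨k, hk⟩ := hpos.exists
  have hterm (i : Fin n) : 0 ≤ w k i * (r k * y i) := by
    by_cases hi : y i = 0
    · simp [hi]
    · exact (mul_pos (hk i hi).1 (hk i hi).2).le
  have hzero : ∑ i, w k i * (r k * y i) = 0 := by
    simp only [mul_left_comm _ (r k), ← mul_sum, hsum, mul_zero]
  funext i
  by_contra hi
  exact (mul_pos (hk i hi).1 (hk i hi).2).ne'
    ((sum_eq_zero_iff_of_nonneg fun i _ => hterm i).1 hzero i (mem_univ i))

lemma mem_Sing_trunc [l.NeBot] (h : HasInitialFace c l z Δ w d a₀)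
    (hz : Tendsto (fun k => ‖z k‖) l atTop) {m : ι → ℂ} {m₀ : ℂ} (hm : Tendsto m l (nhds m₀))
    (hm₀ : m₀ ≠ 0) {r : ι → ℝ}
    (hr : ∀ i, IsBoundedUnder (· ≤ ·) l
      fun k => ‖logGrad c (m k) i (z k) - (r k * ‖z k i‖ ^ 2 : ℝ)‖)
    (heval : eval (trunc c Δ) a₀ = 0) : a₀ ∈ Sing (trunc c Δ) := by
  have hlim (i : Fin n) : Tendsto (fun k => ((Real.exp (-d k) * r k * ‖z k i‖ ^ 2 : ℝ) : ℂ)) l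
      (nhds (logGrad (trunc c Δ) m₀ i a₀)) := by
    have hsub := (h.tendsto_exp_neg_smul_logGrad hm i).sub (h.tendsto_exp_neg_smul_zero (hr i))
    refine (sub_zero (logGrad (trunc c Δ) m₀ i a₀) ▸ hsub).congr fun k => ?_
    rw [← smul_sub, sub_sub_cancel, real_smul, mul_assoc, ofReal_mul (Real.exp _)]
  have hre (i : Fin n) : Tendsto (fun k => Real.exp (-d k) * r k * ‖z k i‖ ^ 2) l
      (nhds (logGrad (trunc c Δ) m₀ i a₀).re) := (continuous_re.tendsto _).comp (hlim i)
  have hreal (i : Fin n) :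
      logGrad (trunc c Δ) m₀ i a₀ = ((logGrad (trunc c Δ) m₀ i a₀).re : ℂ) :=
    tendsto_nhds_unique (hlim i) ((continuous_ofReal.tendsto _).comp (hre i))
  have heuler (k : ι) : ∑ i, w k i * (logGrad (trunc c Δ) m₀ i a₀).re = 0 := by
    rw [sum_mul_re_logGrad_of_dotProduct_eq (d := d k) fun p hp =>
      h.dotProduct_eq p (mem_support_trunc.1 hp).1 (mem_support_trunc.1 hp).2 k]
    simp [heval]
  have hzero := h.eq_zero_of_sum_weight_mul_eq_zero hz hre heuler
  refine mem_Sing_of_logGrad_eq_zero hm₀ h.limit_ne_zero fun i => ?_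
  rw [hreal i, show (logGrad (trunc c Δ) m₀ i a₀).re = 0 from congrFun hzero i, ofReal_zero]

end HasInitialFace

/-- The face of `Γ₀(f)` on which the linear functional with coefficients `w` is maximal. -/
def maxFace (c : MixedCoeff n) (w : Fin n → ℝ) : Set (Fin n → ℝ) :=
  {x ∈ Gamma0 c | ∀ y ∈ Gamma0 c, w ⬝ᵥ y ≤ w ⬝ᵥ x}

lemma suppPt_mem_Gamma0 {c : MixedCoeff n} {p : (Fin n → ℕ) × (Fin n → ℕ)}
    (hp : p ∈ c.support) : suppPt p ∈ Gamma0 c :=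
  subset_convexHull ℝ _ (.inr ⟨p, hp, rfl⟩)

lemma dotProduct_le_of_mem_Gamma0 {c : MixedCoeff n} {w : Fin n → ℝ} {d : ℝ} (hd : 0 ≤ d)
    (h : ∀ p ∈ c.support, w ⬝ᵥ suppPt p ≤ d) {y : Fin n → ℝ} (hy : y ∈ Gamma0 c) :
    w ⬝ᵥ y ≤ d := by
  refine convexHull_min ?_ (convex_halfSpace_le (f := fun y => w ⬝ᵥ y)
    ⟨dotProduct_add w, fun r y => dotProduct_smul r w y⟩ d) hy
  rintro x (rfl | ⟨p, hp, rfl⟩)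
  · simpa using hd
  · exact h p hp

section MaxFace

variable {c : MixedCoeff n} {w : Fin n → ℝ} {p₀ : (Fin n → ℕ) × (Fin n → ℕ)}

lemma suppPt_mem_maxFace_iff (hp₀ : p₀ ∈ c.support)
    (hmax : ∀ p ∈ c.support, w ⬝ᵥ suppPt p ≤ w ⬝ᵥ suppPt p₀) (hnonneg : 0 ≤ w ⬝ᵥ suppPt p₀)
    {p : (Fin n → ℕ) × (Fin n → ℕ)} (hp : p ∈ c.support) :
    suppPt p ∈ maxFace c w ↔ w ⬝ᵥ suppPt p = w ⬝ᵥ suppPt p₀ :=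
  ⟨fun h => (hmax p hp).antisymm (h.2 _ (suppPt_mem_Gamma0 hp₀)), fun h =>
    ⟨suppPt_mem_Gamma0 hp, fun _ hy => h ▸ dotProduct_le_of_mem_Gamma0 hnonneg hmax hy⟩⟩

lemma isGammaPlusFace_maxFace (hp₀ : p₀ ∈ c.support)
    (hmax : ∀ p ∈ c.support, w ⬝ᵥ suppPt p ≤ w ⬝ᵥ suppPt p₀) (hpos : 0 < w ⬝ᵥ suppPt p₀) :
    IsGammaPlusFace c (maxFace c w) := by
  refine ⟨⟨⟨suppPt p₀, (suppPt_mem_maxFace_iff hp₀ hmax hpos.le hp₀).2 rfl⟩, .inr ⟨-w, ?_⟩⟩, ?_⟩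
  · ext x
    change _ ↔ x ∈ Gamma0 c ∧ ∀ y ∈ Gamma0 c, -w ⬝ᵥ x ≤ -w ⬝ᵥ y
    simp only [neg_dotProduct, neg_le_neg_iff]
    rfl
  · intro h0
    simpa using hpos.trans_le (h0.2 _ (suppPt_mem_Gamma0 hp₀))

end MaxFace

lemma exists_isGammaPlusFace_of_dominant {ι : Type*} {l : Filter ι} [l.NeBot]
    {c : MixedCoeff n} {w : ι → Fin n → ℝ} {p₀ : (Fin n → ℕ) × (Fin n → ℕ)}
    (hp₀ : p₀ ∈ c.support) (htop : Tendsto (fun k => w k ⬝ᵥ suppPt p₀) l atTop)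
    (hdom : ∀ p ∈ c.support, (∀ k, w k ⬝ᵥ suppPt p = w k ⬝ᵥ suppPt p₀) ∨
      Tendsto (fun k => w k ⬝ᵥ suppPt p₀ - w k ⬝ᵥ suppPt p) l atTop) :
    ∃ Δ, IsGammaPlusFace c Δ ∧ ∀ p ∈ c.support,
      (suppPt p ∈ Δ → ∀ k, w k ⬝ᵥ suppPt p = w k ⬝ᵥ suppPt p₀) ∧
      (suppPt p ∉ Δ → Tendsto (fun k => w k ⬝ᵥ suppPt p₀ - w k ⬝ᵥ suppPt p) l atTop) := by
  have hgap : ∀ᶠ k in l, ∀ p ∈ c.support, (∀ k', w k' ⬝ᵥ suppPt p = w k' ⬝ᵥ suppPt p₀) ∨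
      0 < w k ⬝ᵥ suppPt p₀ - w k ⬝ᵥ suppPt p := by
    refine (eventually_all_finset _).2 fun p hp => ?_
    rcases hdom p hp with heq | hsub
    · exact .of_forall fun _ => .inl heq
    · exact (hsub.eventually_gt_atTop 0).mono fun _ => .inr
  obtain ⟨k, hk, hpos⟩ := (hgap.and (htop.eventually_gt_atTop 0)).exists
  have hmax : ∀ p ∈ c.support, w k ⬝ᵥ suppPt p ≤ w k ⬝ᵥ suppPt p₀ := fun p hp =>
    (hk p hp).elim (fun heq => (heq k).le) fun hlt => (sub_pos.1 hlt).le
  refine ⟨maxFace c (w k), isGammaPlusFace_maxFace hp₀ hmax hpos, fun p hp => ?_⟩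
  rw [suppPt_mem_maxFace_iff hp₀ hmax hpos.le hp]
  exact ⟨fun heq => (hk p hp).resolve_right (by simp [heq]), fun hne =>
    (hdom p hp).resolve_left fun heq => hne (heq k)⟩

/-- The image of a point of the torus under `z ↦ log |z|`, with `log 0 = 0` off the torus. -/
def logNorm (z : Fin n → ℂ) : Fin n → ℝ := fun i => Real.log ‖z i‖

lemma exists_log_norm_le_logNorm_dotProduct {c : MixedCoeff n} (hconv : Convenient c)
    {z : Fin n → ℂ} (hz : 1 ≤ ‖z‖) :
    ∃ p ∈ c.support, Real.log ‖z‖ ≤ logNorm z ⬝ᵥ suppPt p := by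
  have : Nonempty (Fin n) := by
    by_contra! hempty
    norm_num [Subsingleton.elim z 0] at hz
  obtain ⟨i, hi⟩ := exists_norm_apply_eq_norm z
  obtain ⟨e, he, p, hp, hpe⟩ := hconv i
  refine ⟨p, hp, ?_⟩
  have hsuppPt : suppPt p = Pi.single i (e : ℝ) := by
    funext j
    simp [suppPt, congrFun hpe j, Pi.single_apply]
  rw [hsuppPt, dotProduct_single, logNorm, hi]
  exact le_mul_of_one_le_right (Real.log_nonneg hz) (by exact_mod_cast he)

section Existence

variable {ι : Type*} (U : Ultrafilter ι) {z : ι → Fin n → ℂ}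

lemma exists_tendsto_scale_neg (hz : ∀ k i, z k i ≠ 0) {w : ι → Fin n → ℝ} {u₀ : Fin n → ℝ}
    (hw : Tendsto (fun k => logNorm (z k) - w k) U (nhds u₀)) :
    ∃ a₀ : Fin n → ℂ, (∀ i, a₀ i ≠ 0) ∧ Tendsto (fun k => scale (-w k) (z k)) U (nhds a₀) := by
  have hnorm (i : Fin n) :
      Tendsto (fun k => ‖scale (-w k) (z k) i‖) U (nhds (Real.exp (u₀ i))) := by
    refine ((Real.continuous_exp.tendsto _).comp (tendsto_pi_nhds.1 hw i)).congr fun k => ?_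
    rw [norm_scale_apply, Function.comp_apply, Pi.sub_apply, logNorm, sub_eq_neg_add,
      Real.exp_add, Real.exp_log (norm_pos_iff.2 (hz k i)), Pi.neg_apply]
  choose a₀ ha₀ hlim using fun i => exists_tendsto_of_tendsto_norm U (hnorm i)
  exact ⟨a₀, fun i => norm_ne_zero_iff.1 (ha₀ i ▸ (Real.exp_ne_zero _)), tendsto_pi_nhds.2 hlim⟩

lemma exists_tendsto_logNorm_dotProduct_atTop {c : MixedCoeff n} (hconv : Convenient c)
    (hz : Tendsto (fun k => ‖z k‖) U atTop) :
    ∃ p ∈ c.support, Tendsto (fun k => logNorm (z k) ⬝ᵥ suppPt p) U atTop := by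
  have hlarge : ∀ᶠ k in (U : Filter ι), ∃ p ∈ (c.support : Set _),
      Real.log ‖z k‖ ≤ logNorm (z k) ⬝ᵥ suppPt p := by
    filter_upwards [hz.eventually_ge_atTop 1] with k hk using
      exists_log_norm_le_logNorm_dotProduct hconv hk
  obtain ⟨p, hp, hle⟩ := (Ultrafilter.eventually_exists_mem_iff c.support.finite_toSet).1 hlarge
  exact ⟨p, hp, tendsto_atTop_mono' _ hle (Real.tendsto_log_atTop.comp hz)⟩

lemma exists_dominant_exponent (c : MixedCoeff n) {w : ι → Fin n → ℝ}
    (hw : ∀ p q : c.support, (∀ k, w k ⬝ᵥ (suppPt p.1 - suppPt q.1) = 0) ∨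
      Tendsto (fun k => w k ⬝ᵥ (suppPt p.1 - suppPt q.1)) U atTop ∨
      Tendsto (fun k => w k ⬝ᵥ (suppPt p.1 - suppPt q.1)) U atBot)
    (htop : ∃ p ∈ c.support, Tendsto (fun k => w k ⬝ᵥ suppPt p) U atTop) :
    ∃ p₀ ∈ c.support, Tendsto (fun k => w k ⬝ᵥ suppPt p₀) U atTop ∧
      ∀ p ∈ c.support, (∀ k, w k ⬝ᵥ suppPt p = w k ⬝ᵥ suppPt p₀) ∨
        Tendsto (fun k => w k ⬝ᵥ suppPt p₀ - w k ⬝ᵥ suppPt p) U atTop := by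
  obtain ⟨p, hp, hptop⟩ := htop
  have : Nonempty c.support := ⟨⟨p, hp⟩⟩
  simp only [dotProduct_sub] at hw
  obtain ⟨p₀, hp₀⟩ := exists_forall_eq_or_tendsto_sub_atTop U hw
  refine ⟨p₀, p₀.2, ?_, fun p hp => hp₀ ⟨p, hp⟩⟩
  refine tendsto_atTop_mono' _ ?_ hptop
  rcases hp₀ ⟨p, hp⟩ with heq | hsub
  · exact .of_forall fun k => (heq k).le
  · filter_upwards [hsub.eventually_ge_atTop 0] with k hk using sub_nonneg.1 hk

lemma exists_hasInitialFace {c : MixedCoeff n} (hconv : Convenient c) (hz : ∀ k i, z k i ≠ 0)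
    (hinf : Tendsto (fun k => ‖z k‖) U atTop) :
    ∃ Δ w d a₀, IsGammaPlusFace c Δ ∧ HasInitialFace c U z Δ w d a₀ := by
  obtain ⟨w, u₀, hw, hdich⟩ := exists_tendsto_sub_and_linear_dichotomy U
    (fun pq : c.support × c.support =>
      (dotProductBilin ℝ ℝ).flip (suppPt pq.1.1 - suppPt pq.2.1)) fun k => logNorm (z k)
  obtain ⟨p, hp, hptop⟩ := exists_tendsto_logNorm_dotProduct_atTop U hconv hinf
  have hwtop : Tendsto (fun k => w k ⬝ᵥ suppPt p) U atTop := by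
    have hbounded : Tendsto (fun k => (logNorm (z k) - w k) ⬝ᵥ suppPt p) U
        (nhds (u₀ ⬝ᵥ suppPt p)) :=
      ((continuous_id.dotProduct continuous_const).tendsto u₀).comp hw
    simpa [sub_dotProduct] using hptop.atTop_add hbounded.neg
  obtain ⟨p₀, hp₀, hp₀top, hdom⟩ :=
    exists_dominant_exponent U c (fun p q => hdich (p, q)) ⟨p, hp, hwtop⟩
  obtain ⟨Δ, hΔ, hface⟩ := exists_isGammaPlusFace_of_dominant hp₀ hp₀top hdom
  obtain ⟨a₀, ha₀, hlim⟩ := exists_tendsto_scale_neg U hz hw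
  exact ⟨Δ, w, fun k => w k ⬝ᵥ suppPt p₀, a₀, hΔ, {
    tendsto_height := hp₀top
    tendsto_scale := hlim
    limit_ne_zero := ha₀
    dotProduct_eq := fun p hp => (hface p hp).1
    tendsto_gap := fun p hp => (hface p hp).2 }⟩

end Existence

end Mixed

/-- Corollary 4.3: a convenient Newton non-degenerate mixed polynomial has
`S(f) = ∅`. -/
theorem Sset_empty_of_convenient {n : ℕ} (c : MixedCoeff n)
    (hconv : Convenient c) (hnd : Mixed.NewtonNonDeg c) :
    Mixed.Sset c = ∅ := by
  rw [Set.eq_empty_iff_forall_notMem]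
  rintro v ⟨z, hz, hinf, hlim⟩
  choose z' r m hz' hm hsub heval hlog using fun k =>
    Mixed.exists_torus_approx_of_mem_Milnor (hz k) one_pos
  let U : Ultrafilter ℕ := Ultrafilter.of atTop
  have hU : (U : Filter ℕ) ≤ atTop := Ultrafilter.of_le atTop
  have hinf' : Tendsto (fun k => ‖z' k‖) U atTop := by
    refine tendsto_atTop_mono (fun k => ?_)
      ((tendsto_atTop_add_const_right _ (-1) hinf).mono_left hU)
    linarith [norm_sub_norm_le (z k) (z' k), norm_sub_rev (z k) (z' k), hsub k]
  have hbounded : IsBoundedUnder (· ≤ ·) U fun k => ‖Mixed.eval c (z' k)‖ := by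
    refine ((hlim.norm.mono_left hU).add_const 1).isBoundedUnder_le.mono_le (.of_forall fun k => ?_)
    linarith [norm_sub_norm_le (Mixed.eval c (z' k)) (Mixed.eval c (z k)), heval k]
  obtain ⟨m₀, hm₀, hmlim⟩ := exists_tendsto_of_tendsto_norm U
    (x := m) (tendsto_const_nhds.congr fun k => (hm k).symm)
  obtain ⟨Δ, w, d, a₀, hΔ, hface⟩ := Mixed.exists_hasInitialFace U hconv hz' hinf'
  have heval₀ := hface.eval_trunc_eq_zero hbounded
  exact hnd Δ hΔ a₀ hface.limit_ne_zero heval₀ <|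
    hface.mem_Sing_trunc hinf' hmlim (norm_ne_zero_iff.1 (hm₀ ▸ one_ne_zero))
      (fun i => isBoundedUnder_of ⟨1, fun k => (hlog k i).le⟩) heval₀
end
end
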